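/- Let q be a prime power, d a positive integer, and f ∈ F_q[x,y,z] a nonzero homogeneous polynomial of degree d having no linear factor with coefficients in F_q (i.e., the plane curve C = V(f) has no F_q-linear component). Then the number of points [a:b:c] ∈ P²(F_q) with f(a,b,c) = 0 is at most (d-1)q + 1, except when q = 4, d = 4 and f is projectively equivalent over F_4 (i.e., equal, up to a nonzero scalar, to the image under an invertible F_4-linear change of the variables x,y,z) to K = x⁴ + y⁴ + z⁴ + x²y² + y²z² + z²x² + x²yz + xy²z + xyz²; in that exceptional case the number of F_4-points of C equals 14. -/

import Mathlib

open MvPolynomial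

noncomputable section

/-- The exceptional quartic `K` of Homma--Kim:
`x⁴ + y⁴ + z⁴ + x²y² + y²z² + z²x² + x²yz + xy²z + xyz²`. -/
def hommaKimQuartic (F : Type) [Field F] : MvPolynomial (Fin 3) F :=
  X 0 ^ 4 + X 1 ^ 4 + X 2 ^ 4 + X 0 ^ 2 * X 1 ^ 2 + X 1 ^ 2 * X 2 ^ 2 + X 2 ^ 2 * X 0 ^ 2
    + X 0 ^ 2 * X 1 * X 2 + X 0 * X 1 ^ 2 * X 2 + X 0 * X 1 * X 2 ^ 2

/-- `f` is projectively equivalent over the base field to `g`: `f` equals, up to a nonzero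
scalar, the image of `g` under an invertible linear change of the variables. -/
def ProjectivelyEquivalent (F : Type) [Field F] (f g : MvPolynomial (Fin 3) F) : Prop :=
  ∃ M : Matrix (Fin 3) (Fin 3) F, IsUnit M.det ∧ ∃ c : F, c ≠ 0 ∧
    f = c • (MvPolynomial.aeval (fun i => ∑ j, MvPolynomial.C (M i j) * MvPolynomial.X j) g)

/-! Let `q` be the order of the field and `d` the degree of the curve. The argument depends on how
`d` compares with `q`.

* `d < q`: the bound is inherited by products, so let `f` be irreducible. A singular rational point
  settles the bound by counting on the lines through it. Otherwise expand `f (x + T x^(q))` in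
  powers of `T`; Stöhr and Voloch use the linear term. If `Q` is the first positive index whose
  coefficient is not divisible by `f`, then at each of the `N` rational points both the curve and
  this coefficient have contact of order at least `Q + 1` with the tangent line, and Bézout gives
  `N (Q + 1) ≤ d (d + Q (q - 1))`.
* `d = q`: by a Chevalley--Warning argument the points off the curve satisfy a Cayley--Bacharach
  condition for products of `q - 2` lines. They also meet every line. A curve violating the bound
  leaves out fewer than `2 q` points, which forces `q = 4` and a Fano subplane. The seven vectors at
  which (for `q = 4`) such a quartic takes the value `1` form a group together with `0`, so a change
  of coordinates gives them entries in `{0, 1}`, which determines the quartic.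
* `d = q + 1`: assign to each rational point a tangent line; tangency costs points on that line.
* `d ≥ q + 2`: the bound is at least the number of points of the plane.
-/

section IncidenceGeometry

open Configuration ProjectivePlane Finset

open scoped Classical in
/-- The points of the finite set `S` incident with the line `l`. -/
def pointsOn {P L : Type*} [Membership P L] (S : Finset P) (l : L) : Finset P :=
  {X ∈ S | X ∈ l}

open scoped Classical in
/-- The points of the finite set `S` not incident with the line `l`. -/
def pointsOff {P L : Type*} [Membership P L] (S : Finset P) (l : L) : Finset P :=
  {X ∈ S | X ∉ l}

/-- The Cayley--Bacharach property of a point set with respect to products of at most `k` lines: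
if such a product vanishes at all points of `S` except possibly `R ∈ S`, it also vanishes
at `R`. -/
def IsCayleyBacharach {P : Type*} (L : Type*) [Membership P L] (k : ℕ) (S : Finset P) : Prop :=
  ∀ R ∈ S, ∀ T : Finset L, #T ≤ k → (∀ X ∈ S, X ≠ R → ∃ l ∈ T, X ∈ l) → ∃ l ∈ T, R ∈ l

/-- A blocking set: a finite point set that meets every line. -/
def IsBlockingSet {P : Type*} (L : Type*) [Membership P L] (S : Finset P) : Prop :=
  ∀ l : L, (pointsOn S l).Nonempty

section Membership

variable {P L : Type*} [Membership P L] {S : Finset P} {l : L} {X : P} {k : ℕ}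

@[simp]
lemma mem_pointsOn : X ∈ pointsOn S l ↔ X ∈ S ∧ X ∈ l := by
  simp only [pointsOn, mem_filter]

@[simp]
lemma mem_pointsOff : X ∈ pointsOff S l ↔ X ∈ S ∧ X ∉ l := by
  simp only [pointsOff, mem_filter]

lemma card_pointsOn_add_card_pointsOff (S : Finset P) (l : L) :
    #(pointsOn S l) + #(pointsOff S l) = #S := by
  classical exact card_filter_add_card_filter_not _

lemma IsCayleyBacharach.removeLine (h : IsCayleyBacharach L (k + 1) S) (l : L) :
    IsCayleyBacharach L k (pointsOff S l) := by
  classical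
  intro R hR T hT hcover
  rw [mem_pointsOff] at hR
  obtain ⟨m, hm, hRm⟩ := h R hR.1 (insert l T)
    ((card_insert_le l T).trans (Nat.succ_le_succ hT)) fun X hX hXR ↦ by
      by_cases hXl : X ∈ l
      · exact ⟨l, mem_insert_self l T, hXl⟩
      · obtain ⟨m, hm, hXm⟩ := hcover X (mem_pointsOff.2 ⟨hX, hXl⟩) hXR
        exact ⟨m, mem_insert_of_mem hm, hXm⟩
  obtain rfl | hmT := mem_insert.1 hm
  · exact absurd hRm hR.2
  · exact ⟨m, hmT, hRm⟩

end Membership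

variable {P L : Type*} [Membership P L] [ProjectivePlane P L] {S : Finset P} {k : ℕ}

lemma line_unique {X Y : P} {l m : L} (h : X ≠ Y) (hXl : X ∈ l) (hYl : Y ∈ l) (hXm : X ∈ m)
    (hYm : Y ∈ m) : l = m :=
  (Nondegenerate.eq_or_eq hXl hYl hXm hYm).resolve_left h

lemma exists_line_through (X Y : P) (h : X ≠ Y) : ∃ l : L, X ∈ l ∧ Y ∈ l :=
  ⟨HasLines.mkLine h, HasLines.mkLine_ax h⟩

open scoped Classical in
lemma card_filter_mem_mem_line [Fintype L] {X Y : P} (h : X ≠ Y) :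
    #{l : L | X ∈ l ∧ Y ∈ l} = 1 := by
  obtain ⟨m, hXm, hYm⟩ := exists_line_through (L := L) X Y h
  refine card_eq_one.2 ⟨m, eq_singleton_iff_unique_mem.2 ⟨by simp [hXm, hYm], fun l hl ↦ ?_⟩⟩
  obtain ⟨hXl, hYl⟩ := (mem_filter.1 hl).2
  exact line_unique h hXl hYl hXm hYm

lemma nonempty_lines (P L : Type*) [Membership P L] [ProjectivePlane P L] : Nonempty L :=
  let ⟨_, _, _, l, _⟩ := ProjectivePlane.exists_config (P := P) (L := L)
  ⟨l⟩

section Finite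

variable [Finite P]

open scoped Classical in
lemma card_filter_mem_line [Fintype L] (X : P) : #{l : L | X ∈ l} = order P L + 1 := by
  rw [← lineCount_eq L X, lineCount, Nat.card_eq_fintype_card, Fintype.card_subtype]

variable [Finite L]

lemma exists_mem_ne_ne (X : P) (l m : L) : ∃ k : L, X ∈ k ∧ k ≠ l ∧ k ≠ m := by
  classical
  have := Fintype.ofFinite L
  have hcard : #{l, m} < #{k : L | X ∈ k} := by
    have := one_lt_order P L
    have := card_le_two (a := l) (b := m)
    rw [card_filter_mem_line]
    omega
  obtain ⟨k, hk, hklm⟩ := exists_mem_notMem_of_card_lt_card hcard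
  exact ⟨k, by simpa using hk, by simpa using hklm⟩

lemma exists_mem_notMem (X R : P) (h : X ≠ R) : ∃ l : L, X ∈ l ∧ R ∉ l := by
  obtain ⟨m, hXm, hRm⟩ := exists_line_through (L := L) X R h
  obtain ⟨l, hXl, hlm, -⟩ := exists_mem_ne_ne X m m
  exact ⟨l, hXl, fun hRl ↦ hlm (line_unique h hXl hRl hXm hRm)⟩

variable (L) in
lemma exists_line_of_card_le_two (hS : #S ≤ 2) : ∃ l : L, ∀ X ∈ S, X ∈ l := by
  classical
  obtain hS | hS := Nat.lt_or_ge 1 #S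
  · obtain ⟨X, Y, hXY, rfl⟩ := card_eq_two.1 (show #S = 2 by omega)
    obtain ⟨l, hX, hY⟩ := exists_line_through (L := L) X Y hXY
    exact ⟨l, by simp [hX, hY]⟩
  · obtain ⟨l⟩ := nonempty_lines P L
    obtain rfl | ⟨X, hX⟩ := S.eq_empty_or_nonempty
    · exact ⟨l, by simp⟩
    · obtain ⟨m, hXm, -⟩ := exists_mem_ne_ne X l l
      exact ⟨m, fun Y hY ↦ card_le_one.1 hS X hX Y hY ▸ hXm⟩

/-! ### The Cayley--Bacharach property -/

lemma IsCayleyBacharach.add_two_le_card (h : IsCayleyBacharach L k S) (hS : S.Nonempty) :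
    k + 2 ≤ #S := by
  classical
  obtain ⟨R, hR⟩ := hS
  by_contra! hlt
  have := nonempty_lines P L
  choose! g hg using fun X hX ↦ exists_mem_notMem (L := L) X R hX
  obtain ⟨l, hl, hRl⟩ := h R hR ((S.erase R).image g)
    (card_image_le.trans (by rw [card_erase_of_mem hR]; omega))
    fun X hX hXR ↦ ⟨g X, mem_image_of_mem g (mem_erase.2 ⟨hXR, hX⟩), (hg X hXR).1⟩
  obtain ⟨X, hX, rfl⟩ := mem_image.1 hl
  exact (hg X (ne_of_mem_erase hX)).2 hRl

theorem IsCayleyBacharach.exists_line (h : IsCayleyBacharach L k S) (hS : #S ≤ 2 * k + 1) :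
    ∃ l : L, ∀ X ∈ S, X ∈ l := by
  induction k generalizing S with
  | zero => exact exists_line_of_card_le_two L (by omega)
  | succ k ih =>
    obtain hS' | hS' := Nat.lt_or_ge 1 #S
    · obtain ⟨X, hX, Y, hY, hXY⟩ := one_lt_card.1 hS'
      obtain ⟨l, hXl, hYl⟩ := exists_line_through (L := L) X Y hXY
      have hon : 1 < #(pointsOn S l) :=
        one_lt_card.2 ⟨X, mem_pointsOn.2 ⟨hX, hXl⟩, Y, mem_pointsOn.2 ⟨hY, hYl⟩, hXY⟩
      have hl := card_pointsOn_add_card_pointsOff S l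
      obtain ⟨m, hm⟩ := ih (h.removeLine l) (by omega)
      obtain hoff | hoff := (pointsOff S l).eq_empty_or_nonempty
      · exact ⟨l, fun Z hZ ↦ by_contra fun hZl ↦
          eq_empty_iff_forall_notMem.1 hoff Z (mem_pointsOff.2 ⟨hZ, hZl⟩)⟩
      -- `m` carries the at least `k + 2` points off `l`, which leaves fewer than `k + 2` points.
      have hm_card : #(pointsOff S l) ≤ #(pointsOn S m) := card_le_card fun Z hZ ↦
        mem_pointsOn.2 ⟨(mem_pointsOff.1 hZ).1, hm Z hZ⟩
      have hm' := card_pointsOn_add_card_pointsOff S m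
      have hk := (h.removeLine l).add_two_le_card hoff
      refine ⟨m, fun Z hZ ↦ by_contra fun hZm ↦ ?_⟩
      have := (h.removeLine m).add_two_le_card ⟨Z, mem_pointsOff.2 ⟨hZ, hZm⟩⟩
      omega
    · exact exists_line_of_card_le_two L (by omega)

end Finite

/-! ### Secant counts -/

section Counting

variable [Finite P] [Fintype L]

lemma sum_card_pointsOn (S : Finset P) :
    ∑ l : L, #(pointsOn S l) = #S * (order P L + 1) := by
  classical
  calc ∑ l : L, #(pointsOn S l)
      = ∑ X ∈ S, #{l : L | X ∈ l} := sum_card_bipartiteAbove_eq_sum_card_bipartiteBelow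
          (s := univ) (t := S) (fun (l : L) X ↦ X ∈ l)
    _ = #S * (order P L + 1) := by simp [card_filter_mem_line]

lemma sum_card_pointsOn_sq (S : Finset P) :
    ∑ l : L, #(pointsOn S l) ^ 2 = #S * (order P L + #S) := by
  classical
  have hpairs : ∀ X ∈ S, ∑ Y ∈ S, #{l : L | X ∈ l ∧ Y ∈ l} = order P L + #S := by
    intro X hX
    rw [← add_sum_erase _ _ hX, sum_congr rfl fun Y hY ↦
      card_filter_mem_mem_line (ne_of_mem_erase hY).symm]
    have := card_pos.2 ⟨X, hX⟩
    simp only [and_self, card_filter_mem_line, sum_const, card_erase_of_mem hX, smul_eq_mul]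
    omega
  calc ∑ l : L, #(pointsOn S l) ^ 2
      = ∑ l : L, #{Z ∈ S ×ˢ S | Z.1 ∈ l ∧ Z.2 ∈ l} := by
        simp only [filter_product, card_product, pointsOn, sq]
    _ = ∑ Z ∈ S ×ˢ S, #{l : L | Z.1 ∈ l ∧ Z.2 ∈ l} :=
        sum_card_bipartiteAbove_eq_sum_card_bipartiteBelow
          (s := univ) (t := S ×ˢ S) (fun (l : L) (Z : P × P) ↦ Z.1 ∈ l ∧ Z.2 ∈ l)
    _ = #S * (order P L + #S) := by
        rw [sum_product, sum_congr rfl hpairs, sum_const, smul_eq_mul]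

lemma sum_card_pointsOn_sub_mul_sub (S : Finset P) (a b : ℤ) :
    ∑ l : L, ((#(pointsOn S l) : ℤ) - a) * (#(pointsOn S l) - b) =
      #S * (order P L + #S) - (a + b) * (#S * (order P L + 1)) +
        a * b * (order P L ^ 2 + order P L + 1) := by
  have h₁ : ∑ l : L, (#(pointsOn S l) : ℤ) = #S * (order P L + 1) :=
    mod_cast sum_card_pointsOn S
  have h₂ : ∑ l : L, (#(pointsOn S l) : ℤ) ^ 2 = #S * (order P L + #S) :=
    mod_cast sum_card_pointsOn_sq S
  have h₀ : (Fintype.card L : ℤ) = order P L ^ 2 + order P L + 1 := mod_cast card_lines P L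
  calc ∑ l : L, ((#(pointsOn S l) : ℤ) - a) * (#(pointsOn S l) - b)
      = ∑ l : L, ((#(pointsOn S l) : ℤ) ^ 2 - (a + b) * #(pointsOn S l) + a * b) :=
        sum_congr rfl fun l _ ↦ by ring
    _ = _ := by
        rw [sum_add_distrib, sum_sub_distrib, ← mul_sum, h₁, h₂, sum_const, card_univ,
          nsmul_eq_mul, h₀]
        ring

end Counting

section Blocking

lemma exists_two_lines_of_exists_line_pointsOff {P L : Type*} [Membership P L] {S : Finset P}
    {l : L} (h : ∃ m : L, ∀ X ∈ pointsOff S l, X ∈ m) :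
    ∃ l m : L, ∀ X ∈ S, X ∈ l ∨ X ∈ m := by
  obtain ⟨m, hm⟩ := h
  exact ⟨l, m, fun X hX ↦ or_iff_not_imp_left.2 fun hXl ↦ hm X (mem_pointsOff.2 ⟨hX, hXl⟩)⟩

lemma IsBlockingSet.card_sub_one_mul_card_sub_three_nonpos {P L : Type*} [Membership P L]
    {S : Finset P} (hb : IsBlockingSet L S)
    (h3 : ∀ l : L, #(pointsOn S l) ≤ 3) (l : L) :
    ((#(pointsOn S l) : ℤ) - 1) * (#(pointsOn S l) - 3) ≤ 0 := by
  have := card_pos.2 (hb l)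
  have := h3 l
  exact mul_nonpos_of_nonneg_of_nonpos (by omega) (by omega)

variable {P L : Type*} [Membership P L] [ProjectivePlane P L] {S : Finset P} [Finite P] [Finite L]

lemma exists_two_lines_of_card_le {l : L} {n : ℕ} (hS : #S ≤ n + 2) (hl : n ≤ #(pointsOn S l)) :
    ∃ l m : L, ∀ X ∈ S, X ∈ l ∨ X ∈ m := by
  have := card_pointsOn_add_card_pointsOff S l
  exact exists_two_lines_of_exists_line_pointsOff (l := l)
    (exists_line_of_card_le_two L (by omega))

lemma IsCayleyBacharach.exists_two_lines (h : IsCayleyBacharach L (order P L - 2) S)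
    (hS : #S + 1 ≤ 2 * order P L) {l : L} (hl : 4 ≤ #(pointsOn S l)) :
    ∃ l m : L, ∀ X ∈ S, X ∈ l ∨ X ∈ m := by
  have hlS := card_pointsOn_add_card_pointsOff S l
  obtain hn | hn := Nat.lt_or_ge (order P L) 3
  · exact exists_two_lines_of_card_le (l := l) (n := 1) (by omega) (by omega)
  · obtain ⟨n, hn⟩ := Nat.exists_eq_add_of_le' hn
    rw [hn, show n + 3 - 2 = n + 1 by omega] at h
    exact exists_two_lines_of_exists_line_pointsOff ((h.removeLine l).exists_line (by omega))

lemma IsBlockingSet.exists_three_le_card_pointsOn (hb : IsBlockingSet L S)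
    (hn : order P L = 3) (hS : #S ≤ 5) : ∃ l : L, 3 ≤ #(pointsOn S l) := by
  have := Fintype.ofFinite L
  by_contra! h
  have hsum := sum_card_pointsOn_sub_mul_sub (L := L) S 1 2
  rw [sum_eq_zero fun l _ ↦ by
    have := card_pos.2 (hb l)
    have := h l
    obtain h1 | h2 : #(pointsOn S l) = 1 ∨ #(pointsOn S l) = 2 := by omega
    · simp [h1]
    · simp [h2], hn] at hsum
  interval_cases #S <;> omega

lemma IsBlockingSet.order_le_four (hb : IsBlockingSet L S) (h3 : ∀ l : L, #(pointsOn S l) ≤ 3) :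
    order P L ≤ 4 := by
  have := Fintype.ofFinite L
  have hsum := sum_nonpos fun l (_ : l ∈ univ) ↦ hb.card_sub_one_mul_card_sub_three_nonpos h3 l
  rw [sum_card_pointsOn_sub_mul_sub] at hsum
  by_contra! hn
  have : (5 : ℤ) ≤ order P L := mod_cast hn
  -- The left-hand side of `hsum` is a quadratic in `#S` with discriminant `-3n² + 12n + 4 < 0`.
  nlinarith [sq_nonneg (2 * (#S : ℤ) - (3 * order P L + 4))]

lemma IsBlockingSet.card_eq_seven (hb : IsBlockingSet L S) (h3 : ∀ l : L, #(pointsOn S l) ≤ 3)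
    (hn : order P L = 4) (hS : #S ≤ 7) : #S = 7 ∧ ∀ l : L, #(pointsOn S l) = 1 ∨
      #(pointsOn S l) = 3 := by
  have := Fintype.ofFinite L
  have hterm := hb.card_sub_one_mul_card_sub_three_nonpos h3
  have hsum := sum_card_pointsOn_sub_mul_sub (L := L) S 1 3
  have hsum_nonpos := sum_nonpos fun l (_ : l ∈ univ) ↦ hterm l
  have hfactor : ((#S : ℤ) - 7) * (#S - 9) ≤ 0 := by
    rw [hsum, hn] at hsum_nonpos
    push_cast at hsum_nonpos
    linarith
  have h7 : #S = 7 := by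
    by_contra h
    have : (#S : ℤ) ≤ 6 := by omega
    nlinarith
  rw [h7, hn] at hsum
  refine ⟨h7, fun l ↦ ?_⟩
  have hl := (sum_eq_zero_iff_of_nonpos fun l _ ↦ hterm l).1 (hsum.trans (by norm_num)) l
    (mem_univ l)
  rcases mul_eq_zero.1 hl with h | h
  · exact Or.inl (by omega)
  · exact Or.inr (by omega)

theorem IsBlockingSet.exists_two_lines_or_order_eq_four (hb : IsBlockingSet L S)
    (hcb : IsCayleyBacharach L (order P L - 2) S) (hS : #S + 1 ≤ 2 * order P L) :
    (∃ l m : L, ∀ X ∈ S, X ∈ l ∨ X ∈ m) ∨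
      (order P L = 4 ∧ #S = 7 ∧ ∀ l : L, #(pointsOn S l) = 1 ∨ #(pointsOn S l) = 3) := by
  by_cases h4 : ∃ l : L, 4 ≤ #(pointsOn S l)
  · obtain ⟨l, hl⟩ := h4
    exact Or.inl (hcb.exists_two_lines hS hl)
  have h3 : ∀ l : L, #(pointsOn S l) ≤ 3 := fun l ↦ by
    by_contra! h
    exact h4 ⟨l, h⟩
  obtain hn | hn | hn : order P L = 2 ∨ order P L = 3 ∨ order P L = 4 := by
    have := one_lt_order P L
    have := hb.order_le_four h3
    omega
  · obtain ⟨l⟩ := nonempty_lines P L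
    exact Or.inl (exists_two_lines_of_card_le (n := 1) (by omega) (card_pos.2 (hb l)))
  · obtain ⟨l, hl⟩ := hb.exists_three_le_card_pointsOn hn (by omega)
    exact Or.inl (exists_two_lines_of_card_le (by omega) hl)
  · exact Or.inr ⟨hn, hb.card_eq_seven h3 hn (by omega)⟩

omit [Finite P] [Finite L] in
lemma IsBlockingSet.eq_or_eq_of_notMem (hb : IsBlockingSet L S) {k l m : L}
    (hlm : ∀ X ∈ S, X ∈ l ∨ X ∈ m) {A B : P} (hA : A ∉ S) (hAl : A ∈ l) (hAk : A ∈ k)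
    (hB : B ∉ S) (hBm : B ∈ m) (hBk : B ∈ k) : k = l ∨ k = m := by
  obtain ⟨Y, hY⟩ := hb k
  obtain ⟨hYS, hYk⟩ := mem_pointsOn.1 hY
  exact (hlm Y hYS).imp
    (fun hYl ↦ line_unique (ne_of_mem_of_not_mem hYS hA) hYk hAk hYl hAl)
    (fun hYm ↦ line_unique (ne_of_mem_of_not_mem hYS hB) hYk hBk hYm hBm)

lemma IsBlockingSet.mem_of_mem_of_mem (hb : IsBlockingSet L S) {l m : L}
    (hlm : ∀ X ∈ S, X ∈ l ∨ X ∈ m) {A : P} (hAl : A ∈ l) (hAm : A ∈ m) : A ∈ S := by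
  by_contra hA
  obtain ⟨k, hAk, hkl, hkm⟩ := exists_mem_ne_ne A l m
  exact (hb.eq_or_eq_of_notMem hlm hA hAl hAk hA hAm hAk).elim hkl hkm

lemma IsBlockingSet.exists_line_subset (hb : IsBlockingSet L S) {l m : L}
    (hlm : ∀ X ∈ S, X ∈ l ∨ X ∈ m) : ∃ k : L, ∀ X ∈ k, X ∈ S := by
  by_contra! hno
  obtain ⟨A, hAl, hAS⟩ := hno l
  obtain ⟨B, hBm, hBS⟩ := hno m
  have hAm : A ∉ m := fun h ↦ hAS (hb.mem_of_mem_of_mem hlm hAl h)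
  have hBl : B ∉ l := fun h ↦ hBS (hb.mem_of_mem_of_mem hlm h hBm)
  obtain ⟨k, hAk, hBk⟩ := exists_line_through (L := L) A B fun h ↦ hAm (h ▸ hBm)
  obtain rfl | rfl := hb.eq_or_eq_of_notMem hlm hAS hAl hAk hBS hBm hBk
  · exact hBl hBk
  · exact hAm hAk

lemma card_pointsOn_of_line_subset {k : L} (hk : ∀ X ∈ k, X ∈ S) :
    #(pointsOn S k) = order P L + 1 := by
  classical
  have := Fintype.ofFinite P
  have hS : pointsOn S k = ({X | X ∈ k} : Finset P) := by
    ext X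
    simpa using hk X
  rw [hS, ← pointCount_eq P k, pointCount, Nat.card_eq_fintype_card, Fintype.card_subtype]

lemma IsCayleyBacharach.subset_line (h : IsCayleyBacharach L (order P L - 2) S)
    (hS : #S + 1 ≤ 2 * order P L) {k : L} (hk : ∀ X ∈ k, X ∈ S) : ∀ X ∈ S, X ∈ k := by
  have hkS := card_pointsOn_add_card_pointsOff S k
  rw [card_pointsOn_of_line_subset hk] at hkS
  suffices hoff : pointsOff S k = ∅ from fun X hX ↦ by_contra fun hXk ↦
    eq_empty_iff_forall_notMem.1 hoff X (mem_pointsOff.2 ⟨hX, hXk⟩)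
  obtain hn | hn := Nat.lt_or_ge (order P L) 3
  · exact card_eq_zero.1 (by omega)
  · obtain ⟨n, hn⟩ := Nat.exists_eq_add_of_le' hn
    rw [hn, show n + 3 - 2 = n + 1 by omega] at h
    by_contra hne
    have := (h.removeLine k).add_two_le_card (nonempty_iff_ne_empty.2 hne)
    omega

theorem IsBlockingSet.order_eq_four (hb : IsBlockingSet L S)
    (hcb : IsCayleyBacharach L (order P L - 2) S) (hS : #S + 1 ≤ 2 * order P L)
    (hsecant : ∀ X ∉ S, ∃ l : L, X ∈ l ∧ 1 < #(pointsOn S l)) :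
    order P L = 4 ∧ #S = 7 ∧ ∀ l : L, #(pointsOn S l) = 1 ∨ #(pointsOn S l) = 3 := by
  refine (hb.exists_two_lines_or_order_eq_four hcb hS).resolve_left ?_
  rintro ⟨l, m, hlm⟩
  obtain ⟨k, hk⟩ := hb.exists_line_subset hlm
  have hSk := hcb.subset_line hS hk
  obtain ⟨X, hXk⟩ := Nondegenerate.exists_point (P := P) k
  obtain ⟨r, hXr, hr⟩ := hsecant X fun hX ↦ hXk (hSk X hX)
  obtain ⟨A, hA, B, hB, hAB⟩ := one_lt_card.1 hr
  rw [mem_pointsOn] at hA hB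
  exact hXk (line_unique hAB hA.2 hB.2 (hSk A hA.1) (hSk B hB.1) ▸ hXr)

end Blocking

end IncidenceGeometry

section LineRestriction

open scoped Polynomial Matrix

variable {σ R A : Type*} [CommRing R] [CommRing A] [Algebra R A]

/-- The restriction `f ↦ f (p + X v)` of polynomials to the parametrised line through `p` with
direction `v`. -/
def lineRestriction (p v : σ → R) : MvPolynomial σ R →ₐ[R] R[X] :=
  aeval fun i ↦ Polynomial.C (p i) + Polynomial.C (v i) * Polynomial.X

/-- The vector of partial derivatives of `f` at `p`. -/
def grad (f : MvPolynomial σ R) (p : σ → R) : σ → R :=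
  fun i ↦ eval p (pderiv i f)

lemma taylor_lineRestriction (p v : σ → R) (a : R) (f : MvPolynomial σ R) :
    Polynomial.taylor a (lineRestriction p v f) = lineRestriction (p + a • v) v f := by
  have hcomp : (Polynomial.taylorAlgHom a).comp (lineRestriction p v) =
      lineRestriction (p + a • v) v := by
    ext1 i
    simp only [lineRestriction, AlgHom.comp_apply, aeval_X, Polynomial.taylorAlgHom_apply, map_add,
      Polynomial.taylor_mul, Polynomial.taylor_C, Polynomial.taylor_X, Pi.add_apply, Pi.smul_apply,
      smul_eq_mul, Polynomial.C_mul]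
    ring
  exact DFunLike.congr_fun hcomp f

lemma coeff_zero_lineRestriction (p v : σ → R) (f : MvPolynomial σ R) :
    (lineRestriction p v f).coeff 0 = eval p f := by
  rw [Polynomial.coeff_zero_eq_aeval_zero, lineRestriction, comp_aeval_apply, aeval_eq_eval]
  simp

lemma eval_lineRestriction (p v : σ → R) (a : R) (f : MvPolynomial σ R) :
    (lineRestriction p v f).eval a = eval (p + a • v) f := by
  rw [← Polynomial.taylor_coeff_zero, taylor_lineRestriction, coeff_zero_lineRestriction]

section Taylor

variable [Fintype σ]

lemma sq_dvd_aeval_add_mul_sub (f : MvPolynomial σ R) (x y : σ → A) (e : A) :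
    e ^ 2 ∣ aeval (fun i ↦ x i + e * y i) f -
      (aeval x f + e * ∑ i, y i * aeval x (pderiv i f)) := by
  classical
  induction f using MvPolynomial.induction_on with
  | C a => simp
  | add f g hf hg =>
    convert dvd_add hf hg using 1
    simp only [map_add, mul_add, Finset.sum_add_distrib]
    ring
  | mul_X f j hf =>
    have hderiv : ∑ i, y i * aeval x (pderiv i (f * X j)) =
        y j * aeval x f + x j * ∑ i, y i * aeval x (pderiv i f) := by
      simp only [Derivation.leibniz, pderiv_X, smul_eq_mul, map_add, map_mul, aeval_X, mul_add,
        Finset.sum_add_distrib, Pi.single_apply, apply_ite (aeval x), map_zero, mul_ite,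
        mul_one, mul_zero, Finset.sum_ite_eq, Finset.mem_univ, if_true, Finset.mul_sum]
      congr 1
      exact Finset.sum_congr rfl fun i _ ↦ by ring
    rw [hderiv, map_mul, map_mul, aeval_X, aeval_X]
    obtain ⟨c, hc⟩ := hf
    exact ⟨c * (x j + e * y j) + y j * ∑ i, y i * aeval x (pderiv i f),
      by linear_combination (x j + e * y j) * hc⟩

lemma coeff_one_lineRestriction (p v : σ → R) (f : MvPolynomial σ R) :
    (lineRestriction p v f).coeff 1 = v ⬝ᵥ grad f p := by
  have hconst (g : MvPolynomial σ R) :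
      aeval (fun i ↦ Polynomial.C (p i)) g = Polynomial.C (eval p g) := by
    simpa only [Polynomial.algebraMap_eq, aeval_eq_eval, Function.comp_def] using
      aeval_algebraMap_apply (A := R) R[X] p g
  have hdvd := sq_dvd_aeval_add_mul_sub f (fun i ↦ Polynomial.C (p i))
    (fun i ↦ Polynomial.C (v i)) Polynomial.X
  simp only [hconst, ← Polynomial.C_mul, ← map_sum, mul_comm Polynomial.X] at hdvd
  have hcoeff := Polynomial.X_pow_dvd_iff.1 hdvd 1 one_lt_two
  rwa [Polynomial.coeff_sub, Polynomial.coeff_add, Polynomial.coeff_C_succ, zero_add,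
    Polynomial.coeff_C_mul_X, if_pos rfl, sub_eq_zero] at hcoeff

lemma eval_derivative_lineRestriction (p v : σ → R) (a : R) (f : MvPolynomial σ R) :
    (lineRestriction p v f).derivative.eval a = v ⬝ᵥ grad f (p + a • v) := by
  rw [← Polynomial.taylor_coeff_one, taylor_lineRestriction, coeff_one_lineRestriction]

end Taylor

section Homogeneous

variable {f : MvPolynomial σ R} {d : ℕ}

lemma aeval_smul_of_isHomogeneous (hf : f.IsHomogeneous d) (a : A) (x : σ → A) :
    aeval (a • x) f = a ^ d * aeval x f := by
  rw [aeval_def, aeval_def, eval₂_eq, eval₂_eq, Finset.mul_sum]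
  refine Finset.sum_congr rfl fun s hs ↦ ?_
  have hdeg : ∑ i ∈ s.support, s i = d := by
    simpa [Finsupp.weight_apply, Finsupp.sum] using hf (mem_support_iff.1 hs)
  simp only [Pi.smul_apply, smul_eq_mul, mul_pow, Finset.prod_mul_distrib,
    Finset.prod_pow_eq_pow_sum, hdeg]
  ring

lemma eval_smul_of_isHomogeneous (hf : f.IsHomogeneous d) (a : R) (x : σ → R) :
    eval (a • x) f = a ^ d * eval x f := by
  simpa only [aeval_eq_eval] using aeval_smul_of_isHomogeneous hf a x

lemma grad_smul_of_isHomogeneous (hf : f.IsHomogeneous d) (a : R) (x : σ → R) :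
    grad f (a • x) = a ^ (d - 1) • grad f x :=
  funext fun _ ↦ eval_smul_of_isHomogeneous hf.pderiv a x

lemma dotProduct_grad_of_isHomogeneous [Fintype σ] (hf : f.IsHomogeneous d) (p : σ → R) :
    p ⬝ᵥ grad f p = d * eval p f := by
  simpa only [map_sum, map_mul, eval_X, nsmul_eq_mul, map_natCast, dotProduct, grad] using
    congrArg (eval p) hf.sum_X_mul_pderiv

/-- A form restricted to the span of two vectors is a binary form, whose dehomogenisation is the
restriction to the affine line. -/
lemma aeval_mul_add_mul_of_isHomogeneous (hf : f.IsHomogeneous d) (p v : σ → R) (a b : A) :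
    aeval (fun i ↦ algebraMap R A (p i) * a + algebraMap R A (v i) * b) f =
      ∑ k ∈ Finset.range (d + 1),
        algebraMap R A ((lineRestriction p v f).coeff k) * (a ^ (d - k) * b ^ k) := by
  set g : MvPolynomial (Fin 2) R := aeval (fun i ↦ C (p i) * X 1 + C (v i) * X 0) f with hg
  have hgd : g.IsHomogeneous d := by
    simpa only [one_mul] using hf.aeval _ (n := 1) fun i ↦
      ((isHomogeneous_X R 1).C_mul (p i)).add ((isHomogeneous_X R 0).C_mul (v i))
  have hdehom : aeval ![Polynomial.X, 1] g = lineRestriction p v f := by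
    rw [hg, comp_aeval_apply, lineRestriction]
    simp [← MvPolynomial.algebraMap_eq]
  have hbinary : aeval ![b, a] g =
      aeval (fun i ↦ algebraMap R A (p i) * a + algebraMap R A (v i) * b) f := by
    rw [hg, comp_aeval_apply]
    simp [← MvPolynomial.algebraMap_eq]
  rw [← hbinary, ← Polynomial.homogenize_eq_of_isHomogeneous hgd hdehom, Polynomial.homogenize,
    Finset.Nat.sum_antidiagonal_eq_sum_range_succ_mk, map_sum]
  refine Finset.sum_congr rfl fun k _ ↦ ?_
  rw [aeval_monomial, mul_comm (a ^ _)]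
  simp

lemma natDegree_lineRestriction_le (hf : f.IsHomogeneous d) (p v : σ → R) :
    (lineRestriction p v f).natDegree ≤ d := by
  have h := aeval_mul_add_mul_of_isHomogeneous (A := R[X]) hf p v 1 Polynomial.X
  simp only [mul_one, one_pow, one_mul, Polynomial.algebraMap_eq] at h
  rw [lineRestriction, h]
  refine Polynomial.natDegree_sum_le_of_forall_le _ _ fun k hk ↦ ?_
  exact (Polynomial.natDegree_C_mul_X_pow_le _ _).trans (Finset.mem_range_succ_iff.1 hk)

lemma coeff_lineRestriction_swap (hf : f.IsHomogeneous d) (p v : σ → R) {k : ℕ} (hk : k ≤ d) :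
    (lineRestriction v p f).coeff k = (lineRestriction p v f).coeff (d - k) := by
  have h := aeval_mul_add_mul_of_isHomogeneous (A := R[X]) hf p v Polynomial.X 1
  simp only [mul_one, one_pow, Polynomial.algebraMap_eq] at h
  rw [lineRestriction, funext fun i ↦ add_comm (Polynomial.C (v i)) _, h,
    Polynomial.finsetSum_coeff, Finset.sum_eq_single (d - k)]
  · rw [Nat.sub_sub_self hk, Polynomial.coeff_C_mul_X_pow, if_pos rfl]
  · intro j hj hne
    rw [Polynomial.coeff_C_mul_X_pow, if_neg]
    have := Finset.mem_range_succ_iff.1 hj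
    omega
  · exact fun h ↦ absurd (Finset.mem_range_succ_iff.2 (Nat.sub_le d k)) h

lemma coeff_top_lineRestriction (hf : f.IsHomogeneous d) (p v : σ → R) :
    (lineRestriction p v f).coeff d = eval v f := by
  rw [← coeff_zero_lineRestriction v p, coeff_lineRestriction_swap hf p v d.zero_le, Nat.sub_zero]

end Homogeneous

end LineRestriction

section LinearForm

open scoped Matrix

section CommRing

variable {σ R : Type*} [Fintype σ] [CommRing R]

/-- The linear form `∑ i, l i * X i` with coefficient vector `l`. -/
def linearForm (l : σ → R) : MvPolynomial σ R :=
  ∑ i, C (l i) * X i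

lemma isHomogeneous_linearForm (l : σ → R) : (linearForm l).IsHomogeneous 1 :=
  IsHomogeneous.sum _ _ _ fun i _ ↦ (isHomogeneous_X R i).C_mul (l i)

lemma eval_linearForm (l x : σ → R) : eval x (linearForm l) = l ⬝ᵥ x := by
  simp [linearForm, dotProduct]

lemma linearForm_ne_zero {l : σ → R} (hl : l ≠ 0) : linearForm l ≠ 0 := by
  classical
  contrapose! hl
  ext i
  simpa [eval_linearForm] using congrArg (eval (Pi.single i 1)) hl

lemma lineRestriction_linearForm (p v l : σ → R) :
    lineRestriction p v (linearForm l) =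
      Polynomial.C (l ⬝ᵥ p) + Polynomial.C (l ⬝ᵥ v) * Polynomial.X := by
  simp [lineRestriction, linearForm, dotProduct, mul_add, Finset.sum_add_distrib, Finset.sum_mul,
    mul_assoc, ← MvPolynomial.algebraMap_eq]

/-- Cramer's rule, with the determinants written as triple products. -/
lemma tripleProduct_smul_eq (p v n x : Fin 3 → R) :
    (n ⬝ᵥ p ⨯₃ v) • x = (x ⬝ᵥ v ⨯₃ n) • p + (x ⬝ᵥ n ⨯₃ p) • v + (x ⬝ᵥ p ⨯₃ v) • n := by
  ext i
  fin_cases i <;> simp [crossProduct, dotProduct, Fin.sum_univ_three] <;> ring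

lemma C_tripleProduct_mul_X (p v n : Fin 3 → R) (i : Fin 3) :
    C (n ⬝ᵥ p ⨯₃ v) * X i = C (p i) * linearForm (v ⨯₃ n) + C (v i) * linearForm (n ⨯₃ p) +
      linearForm (p ⨯₃ v) * C (n i) := by
  fin_cases i <;> simp [linearForm, crossProduct, dotProduct, Fin.sum_univ_three] <;> ring

end CommRing

variable {F : Type*} [Field F]

lemma exists_dotProduct_eq_one {ι : Type*} [Fintype ι] {w : ι → F} (hw : w ≠ 0) :
    ∃ n : ι → F, n ⬝ᵥ w = 1 := by
  classical
  obtain ⟨i, hi⟩ := Function.ne_iff.1 hw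
  exact ⟨Pi.single i (w i)⁻¹, by rw [single_dotProduct, inv_mul_cancel₀ hi]⟩

/-- The polynomial `f` has no homogeneous linear factor over its coefficient ring; for a ternary
form over `F_q`, the plane curve it defines has no `F_q`-linear component. -/
def NoLinearFactor {σ R : Type*} [CommSemiring R] (f : MvPolynomial σ R) : Prop :=
  ¬ ∃ l : MvPolynomial σ R, l ≠ 0 ∧ l.IsHomogeneous 1 ∧ l ∣ f

lemma linearForm_crossProduct_dvd {f : MvPolynomial (Fin 3) F} {d : ℕ} (hf : f.IsHomogeneous d)
    {p v : Fin 3 → F} (hpv : p ⨯₃ v ≠ 0) (hzero : lineRestriction p v f = 0) :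
    linearForm (p ⨯₃ v) ∣ f := by
  obtain ⟨n, hn⟩ := exists_dotProduct_eq_one hpv
  have hX (i : Fin 3) : algebraMap F (MvPolynomial (Fin 3) F) (p i) * linearForm (v ⨯₃ n) +
      algebraMap F _ (v i) * linearForm (n ⨯₃ p) + linearForm (p ⨯₃ v) * C (n i) = X i := by
    simp only [MvPolynomial.algebraMap_eq]
    rw [← C_tripleProduct_mul_X, hn, C_1, one_mul]
  have hdvd := (dvd_pow_self _ two_ne_zero).trans <| sq_dvd_aeval_add_mul_sub f
    (fun i ↦ algebraMap F (MvPolynomial (Fin 3) F) (p i) * linearForm (v ⨯₃ n) +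
      algebraMap F _ (v i) * linearForm (n ⨯₃ p)) (fun i ↦ C (n i)) (linearForm (p ⨯₃ v))
  rw [aeval_mul_add_mul_of_isHomogeneous hf, hzero] at hdvd
  simp only [hX, Polynomial.coeff_zero, map_zero, zero_mul, Finset.sum_const_zero, zero_add] at hdvd
  rw [aeval_X_left_apply] at hdvd
  exact (dvd_sub_left (dvd_mul_right _ _)).1 hdvd

lemma NoLinearFactor.lineRestriction_ne_zero {f : MvPolynomial (Fin 3) F} {d : ℕ}
    (hno : NoLinearFactor f) (hf : f.IsHomogeneous d) {p v : Fin 3 → F} (hpv : p ⨯₃ v ≠ 0) :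
    lineRestriction p v f ≠ 0 :=
  fun hzero ↦ hno ⟨_, linearForm_ne_zero hpv, isHomogeneous_linearForm _,
    linearForm_crossProduct_dvd hf hpv hzero⟩

end LinearForm

section Incidence

open Configuration ProjectivePlane Finset

variable {P L : Type*} [Membership P L] [ProjectivePlane P L] [Finite P] [Finite L]

lemma exists_mem_line_ne (X : P) (l : L) : ∃ Y ∈ l, Y ≠ X := by
  have := Fintype.ofFinite P
  have hcard : #(pointsOn (univ : Finset P) l) = order P L + 1 :=
    card_pointsOn_of_line_subset fun X _ ↦ mem_univ X
  obtain ⟨Y, hY, hne⟩ := exists_mem_ne (s := pointsOn (univ : Finset P) l)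
    (by have := one_lt_order P L; omega) X
  exact ⟨Y, (mem_pointsOn.1 hY).2, hne⟩

lemma card_le_one_add_mul_of_mem {S : Finset P} {X : P} {k : ℕ} (hX : X ∈ S)
    (hk : ∀ l : L, X ∈ l → #(pointsOn S l) ≤ k + 1) : #S ≤ 1 + (order P L + 1) * k := by
  classical
  have := Fintype.ofFinite L
  have hcover :
      S ⊆ {X} ∪ ({l : L | X ∈ l} : Finset L).biUnion fun l ↦ (pointsOn S l).erase X := by
    intro Y hY
    obtain rfl | hYX := eq_or_ne Y X
    · simp
    · obtain ⟨l, hYl, hXl⟩ := exists_line_through (L := L) Y X hYX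
      refine mem_union_right _ (mem_biUnion.2 ⟨l, ?_, ?_⟩) <;> simp [hXl, hYX, hY, hYl]
  refine (card_le_card hcover).trans ((card_union_le _ _).trans ?_)
  rw [card_singleton, ← card_filter_mem_line (L := L) X]
  refine Nat.add_le_add_left (card_biUnion_le_card_mul _ _ _ fun l hl ↦ ?_) 1
  have hXl := (mem_filter.1 hl).2
  rw [card_erase_of_mem (mem_pointsOn.2 ⟨hX, hXl⟩)]
  exact Nat.sub_le_of_le_add (hk l hXl)

end Incidence

section DoubleRoots

open Finset Polynomial

lemma card_roots_add_card_double_roots_le {R : Type*} [CommRing R] [IsDomain R] {g : R[X]}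
    (hg : g ≠ 0) {s t : Finset R} (hts : t ⊆ s) (hs : ∀ a ∈ s, g.IsRoot a)
    (ht : ∀ a ∈ t, (derivative g).IsRoot a) : #s + #t ≤ g.natDegree := by
  classical
  have hle : s.val + t.val ≤ g.roots := by
    refine Multiset.le_iff_count.2 fun a ↦ ?_
    rw [Multiset.count_add, count_roots]
    by_cases has : a ∈ s
    · by_cases hat : a ∈ t
      · rw [Multiset.count_eq_one_of_mem s.nodup has, Multiset.count_eq_one_of_mem t.nodup hat]
        exact (one_lt_rootMultiplicity_iff_isRoot hg).2 ⟨hs a has, ht a hat⟩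
      · rw [Multiset.count_eq_one_of_mem s.nodup has, Multiset.count_eq_zero_of_notMem hat]
        exact (rootMultiplicity_pos hg).2 (hs a has)
    · rw [Multiset.count_eq_zero_of_notMem has, Multiset.count_eq_zero_of_notMem (has ∘ @hts a)]
      exact Nat.zero_le _
  simpa using (Multiset.card_le_card hle).trans (card_roots' g)

end DoubleRoots

section PlanePoints

open Configuration ProjectivePlane Projectivization Finset
open scoped LinearAlgebra.Projectivization Matrix

variable {F : Type*} [Field F]

/-- The projective plane over `F`; through the standard bilinear form, its elements also serve as
the lines of the plane. -/
abbrev ProjPlane (F : Type*) [Field F] : Type _ := ℙ F (Fin 3 → F)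

instance [Finite F] : Fintype (ProjPlane F) :=
  haveI : Finite (ProjPlane F) := Projectivization.finite_of_finite F (Fin 3 → F)
  Fintype.ofFinite _

lemma mk_mem_iff {x : Fin 3 → F} (hx : x ≠ 0) (l : ProjPlane F) :
    mk F x hx ∈ l ↔ x ⬝ᵥ l.rep = 0 := by
  rw [ofField.mem_iff, ← orthogonal_mk hx l.rep_nonzero, mk_rep]

lemma mem_mk_iff (X : ProjPlane F) {l : Fin 3 → F} (hl : l ≠ 0) :
    X ∈ mk F l hl ↔ X.rep ⬝ᵥ l = 0 := by
  rw [ofField.mem_iff, ← orthogonal_mk X.rep_nonzero hl, mk_rep]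

lemma mem_iff_dotProduct_rep (X l : ProjPlane F) : X ∈ l ↔ X.rep ⬝ᵥ l.rep = 0 := by
  rw [← mk_mem_iff X.rep_nonzero, mk_rep]

lemma crossProduct_rep_ne_zero {X Y : ProjPlane F} (h : X ≠ Y) : X.rep ⨯₃ Y.rep ≠ 0 := by
  classical
  rwa [Ne, ← mk_eq_mk_iff_crossProduct_eq_zero X.rep_nonzero Y.rep_nonzero, mk_rep, mk_rep]

lemma add_smul_ne_zero {u p : Fin 3 → F} (h : u ⨯₃ p ≠ 0) (a : F) : u + a • p ≠ 0 := by
  contrapose! h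
  rw [eq_neg_of_add_eq_zero_left h, ← neg_smul, map_smul, LinearMap.smul_apply, _root_.cross_self,
    smul_zero]

/-- The points `u + a p` on the line spanned by `u` and `p`; only the point `p` is missed. -/
def affinePoint {u p : Fin 3 → F} (h : u ⨯₃ p ≠ 0) (a : F) : ProjPlane F :=
  mk F (u + a • p) (add_smul_ne_zero h a)

lemma exists_eq_smul_add_smul {x u p l : Fin 3 → F} (hl : l ≠ 0) (hx : x ⬝ᵥ l = 0)
    (hu : u ⬝ᵥ l = 0) (hp : p ⬝ᵥ l = 0) (h : u ⨯₃ p ≠ 0) : ∃ a b : F, x = a • u + b • p := by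
  obtain ⟨w, hw⟩ := exists_dotProduct_eq_one hl
  obtain ⟨n, hn⟩ := exists_dotProduct_eq_one h
  have htriple : x ⬝ᵥ u ⨯₃ p = 0 := by
    simpa [hx, hu, hp, hw] using congrArg (· ⬝ᵥ l) (tripleProduct_smul_eq u p x w)
  have hcomb := tripleProduct_smul_eq u p n x
  rw [hn, one_smul, htriple, zero_smul, add_zero] at hcomb
  exact ⟨_, _, hcomb⟩

lemma exists_affinePoint_eq {X U P l : ProjPlane F} (hX : X ∈ l) (hU : U ∈ l) (hP : P ∈ l)
    (h : U.rep ⨯₃ P.rep ≠ 0) (hXP : X ≠ P) : ∃ a, affinePoint h a = X := by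
  rw [mem_iff_dotProduct_rep] at hX hU hP
  obtain ⟨α, β, hcomb⟩ := exists_eq_smul_add_smul l.rep_nonzero hX hU hP h
  have hα : α ≠ 0 := by
    intro hα
    refine hXP ?_
    rw [← X.mk_rep, ← P.mk_rep, mk_eq_mk_iff']
    exact ⟨β, by rw [hcomb, hα, zero_smul, zero_add]⟩
  refine ⟨β / α, ?_⟩
  rw [← X.mk_rep, affinePoint, mk_eq_mk_iff']
  exact ⟨α⁻¹, by rw [hcomb, smul_add, smul_smul, smul_smul, inv_mul_cancel₀ hα, one_smul,
    inv_mul_eq_div]⟩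

section Fintype

variable [Fintype F]

lemma card_projPlane : Fintype.card (ProjPlane F) = Fintype.card F ^ 2 + Fintype.card F + 1 := by
  have h := Projectivization.card_of_finrank F (Fin 3 → F) (n := 3) (by simp)
  rw [← Nat.card_eq_fintype_card, h, sum_range_succ, sum_range_succ, sum_range_one,
    Nat.card_eq_fintype_card]
  ring

lemma order_projPlane [DecidableEq F] : order (ProjPlane F) (ProjPlane F) = Fintype.card F := by
  have h := card_points (ProjPlane F) (ProjPlane F)
  rw [card_projPlane] at h
  nlinarith

end Fintype

/-! ### Rational points of plane curves -/

variable {f : MvPolynomial (Fin 3) F} {d : ℕ}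

lemma eval_rep_mk_eq_zero_iff (hf : f.IsHomogeneous d) {x : Fin 3 → F} (hx : x ≠ 0) :
    eval (mk F x hx).rep f = 0 ↔ eval x f = 0 := by
  obtain ⟨a, ha⟩ := exists_smul_eq_mk_rep F x hx
  rw [← ha, Units.smul_def, eval_smul_of_isHomogeneous hf]
  simp

lemma dotProduct_grad_rep_mk_eq_zero_iff (hf : f.IsHomogeneous d) {x : Fin 3 → F} (hx : x ≠ 0)
    (y : Fin 3 → F) : y ⬝ᵥ grad f (mk F x hx).rep = 0 ↔ y ⬝ᵥ grad f x = 0 := by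
  obtain ⟨a, ha⟩ := exists_smul_eq_mk_rep F x hx
  rw [← ha, Units.smul_def, grad_smul_of_isHomogeneous hf, dotProduct_smul]
  simp

lemma natDegree_lineRestriction_ne (hno : NoLinearFactor f) (hf : f.IsHomogeneous d)
    {u p : Fin 3 → F} (h : u ⨯₃ p ≠ 0) (hp : eval p f = 0) :
    (lineRestriction u p f).natDegree ≠ d := by
  intro hd
  rw [← coeff_top_lineRestriction hf u, ← hd, ← Polynomial.leadingCoeff,
    Polynomial.leadingCoeff_eq_zero] at hp
  exact hno.lineRestriction_ne_zero hf h hp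

lemma natDegree_lineRestriction_ne_of_tangent (hno : NoLinearFactor f) (hf : f.IsHomogeneous d)
    {u p : Fin 3 → F} (h : u ⨯₃ p ≠ 0) (hp : u ⬝ᵥ grad f p = 0) :
    (lineRestriction u p f).natDegree + 1 ≠ d := by
  rintro rfl
  rw [← coeff_one_lineRestriction, coeff_lineRestriction_swap hf _ _ (by omega),
    Nat.add_sub_cancel, ← Polynomial.leadingCoeff, Polynomial.leadingCoeff_eq_zero] at hp
  exact hno.lineRestriction_ne_zero hf h hp

variable [Fintype F]

open scoped Classical in
/-- The rational points of the plane curve `f = 0`. -/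
def zeroPoints (f : MvPolynomial (Fin 3) F) : Finset (ProjPlane F) :=
  {X | eval X.rep f = 0}

open scoped Classical in
/-- The rational points off the plane curve `f = 0`. -/
def nonzeroPoints (f : MvPolynomial (Fin 3) F) : Finset (ProjPlane F) :=
  {X | eval X.rep f ≠ 0}

open scoped Classical in
/-- The rational points of the curve `f = 0` at which the line `l` is tangent; every line through a
singular point counts as tangent there. -/
def tangencyPoints (f : MvPolynomial (Fin 3) F) (l : ProjPlane F) : Finset (ProjPlane F) :=
  {X ∈ pointsOn (zeroPoints f) l | ∀ Y ∈ l, Y.rep ⬝ᵥ grad f X.rep = 0}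

@[simp]
lemma mem_zeroPoints {X : ProjPlane F} : X ∈ zeroPoints f ↔ eval X.rep f = 0 := by
  simp [zeroPoints]

@[simp]
lemma mem_nonzeroPoints {X : ProjPlane F} : X ∈ nonzeroPoints f ↔ eval X.rep f ≠ 0 := by
  simp [nonzeroPoints]

lemma mem_tangencyPoints {X l : ProjPlane F} : X ∈ tangencyPoints f l ↔
    (eval X.rep f = 0 ∧ X ∈ l) ∧ ∀ Y ∈ l, Y.rep ⬝ᵥ grad f X.rep = 0 := by
  simp [tangencyPoints]

variable (f) in
lemma card_zeroPoints_add_card_nonzeroPoints :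
    #(zeroPoints f) + #(nonzeroPoints f) = Fintype.card F ^ 2 + Fintype.card F + 1 := by
  classical
  rw [← card_projPlane, zeroPoints, nonzeroPoints, card_filter_add_card_filter_not, card_univ]

variable (f) in
lemma card_pointsOn_zeroPoints_add_nonzeroPoints (l : ProjPlane F) :
    #(pointsOn (zeroPoints f) l) + #(pointsOn (nonzeroPoints f) l) = Fintype.card F + 1 := by
  classical
  rw [← order_projPlane, ← card_pointsOn_of_line_subset (S := univ) (k := l) (by simp),
    ← card_union_of_disjoint]
  · congr 1
    ext X
    simp only [mem_union, mem_pointsOn, mem_zeroPoints, mem_nonzeroPoints, mem_univ]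
    tauto
  · exact disjoint_left.2 fun X hX hX' ↦ by simp_all

lemma exists_mem_tangencyPoints (hf : f.IsHomogeneous d) {P : ProjPlane F}
    (hP : P ∈ zeroPoints f) : ∃ l, P ∈ tangencyPoints f l := by
  classical
  rw [mem_zeroPoints] at hP
  by_cases hgrad : grad f P.rep = 0
  · obtain ⟨U, -, hne⟩ := exists_mem_line_ne P (P : ProjPlane F)
    obtain ⟨l, -, hPl⟩ := exists_line_through (L := ProjPlane F) U P hne
    exact ⟨l, mem_tangencyPoints.2 ⟨⟨hP, hPl⟩, by simp [hgrad]⟩⟩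
  · refine ⟨mk F _ hgrad, mem_tangencyPoints.2
      ⟨⟨hP, (mem_mk_iff _ _).2 ?_⟩, fun Y ↦ (mem_mk_iff _ _).1⟩⟩
    rw [dotProduct_grad_of_isHomogeneous hf, hP, mul_zero]

lemma isRoot_lineRestriction_iff (hf : f.IsHomogeneous d) {u p : Fin 3 → F} (h : u ⨯₃ p ≠ 0)
    (a : F) : (lineRestriction u p f).IsRoot a ↔ affinePoint h a ∈ zeroPoints f := by
  rw [mem_zeroPoints, affinePoint, eval_rep_mk_eq_zero_iff hf, Polynomial.IsRoot,
    eval_lineRestriction]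

lemma isRoot_derivative_lineRestriction {l P : ProjPlane F} (hf : f.IsHomogeneous d)
    {u : Fin 3 → F} (h : u ⨯₃ P.rep ≠ 0) (hP : P ∈ l) {a : F}
    (ha : affinePoint h a ∈ tangencyPoints f l) :
    (lineRestriction u P.rep f).derivative.IsRoot a := by
  rw [Polynomial.IsRoot, eval_derivative_lineRestriction,
    ← dotProduct_grad_rep_mk_eq_zero_iff hf (add_smul_ne_zero h a)]
  exact (mem_tangencyPoints.1 ha).2 P hP

lemma card_erase_add_card_erase_le_natDegree [DecidableEq (ProjPlane F)]
    (hno : NoLinearFactor f) (hf : f.IsHomogeneous d) {l U P : ProjPlane F} (hU : U ∈ l)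
    (hP : P ∈ l) (hUP : U ≠ P) :
    #((pointsOn (zeroPoints f) l).erase P) + #((tangencyPoints f l).erase P) ≤
      (lineRestriction U.rep P.rep f).natDegree := by
  classical
  have hcross := crossProduct_rep_ne_zero hUP
  have hcard {S : Finset (ProjPlane F)} (hS : ∀ X ∈ S, X ∈ l) :
      #(S.erase P) ≤ #({a | affinePoint hcross a ∈ S} : Finset F) := by
    refine (card_le_card fun X hX ↦ ?_).trans (card_image_le (f := affinePoint hcross))
    obtain ⟨hXP, hX⟩ := mem_erase.1 hX
    obtain ⟨a, rfl⟩ := exists_affinePoint_eq (hS X hX) hU hP hcross hXP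
    exact mem_image_of_mem _ (by simpa using hX)
  refine (add_le_add (hcard fun X hX ↦ (mem_pointsOn.1 hX).2)
    (hcard fun X hX ↦ (mem_tangencyPoints.1 hX).1.2)).trans
    (card_roots_add_card_double_roots_le (hno.lineRestriction_ne_zero hf hcross) ?_ ?_ ?_)
  · exact monotone_filter_right _ fun a _ ha ↦ (mem_filter.1 ha).1
  · exact fun a ha ↦ (isRoot_lineRestriction_iff hf hcross a).2
      (mem_pointsOn.1 (mem_filter.1 ha).2).1
  · exact fun a ha ↦ isRoot_derivative_lineRestriction hf hcross hP (mem_filter.1 ha).2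

lemma card_pointsOn_add_card_tangencyPoints_le (hno : NoLinearFactor f) (hf : f.IsHomogeneous d)
    (l : ProjPlane F) : #(pointsOn (zeroPoints f) l) + #(tangencyPoints f l) ≤ d := by
  classical
  obtain ⟨P, hP, -⟩ := exists_mem_line_ne l l
  obtain ⟨U, hU, hUP⟩ := exists_mem_line_ne P l
  have hcross := crossProduct_rep_ne_zero hUP
  have hcount := card_erase_add_card_erase_le_natDegree hno hf hU hP hUP
  have hdeg := natDegree_lineRestriction_le hf U.rep P.rep
  by_cases hPf : P ∈ pointsOn (zeroPoints f) l
  · have hne := natDegree_lineRestriction_ne hno hf hcross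
      (mem_zeroPoints.1 (mem_pointsOn.1 hPf).1)
    rw [card_erase_of_mem hPf] at hcount
    by_cases hPt : P ∈ tangencyPoints f l
    · have hne' := natDegree_lineRestriction_ne_of_tangent hno hf hcross
        ((mem_tangencyPoints.1 hPt).2 U hU)
      rw [card_erase_of_mem hPt] at hcount
      omega
    · rw [erase_eq_of_notMem hPt] at hcount
      omega
  · have hPt : P ∉ tangencyPoints f l := fun h ↦ hPf (mem_filter.1 h).1
    rw [erase_eq_of_notMem hPf, erase_eq_of_notMem hPt] at hcount
    omega

lemma card_pointsOn_zeroPoints_le (hno : NoLinearFactor f) (hf : f.IsHomogeneous d)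
    (l : ProjPlane F) : #(pointsOn (zeroPoints f) l) ≤ d :=
  le_of_add_le_left (card_pointsOn_add_card_tangencyPoints_le hno hf l)

lemma card_pointsOn_zeroPoints_lt_of_tangent (hno : NoLinearFactor f) (hf : f.IsHomogeneous d)
    {P l : ProjPlane F} (hP : P ∈ tangencyPoints f l) : #(pointsOn (zeroPoints f) l) < d := by
  have := card_pointsOn_add_card_tangencyPoints_le hno hf l
  have := card_pos.2 ⟨P, hP⟩
  omega

lemma card_zeroPoints_le_of_grad_eq_zero (hno : NoLinearFactor f) (hf : f.IsHomogeneous d)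
    {P : ProjPlane F} (hP : P ∈ zeroPoints f) (hgrad : grad f P.rep = 0) :
    #(zeroPoints f) ≤ 1 + (Fintype.card F + 1) * (d - 2) := by
  classical
  rw [← order_projPlane]
  refine card_le_one_add_mul_of_mem hP fun l hl ↦ ?_
  have := card_pointsOn_zeroPoints_lt_of_tangent hno hf
    (mem_tangencyPoints.2 ⟨⟨mem_zeroPoints.1 hP, hl⟩, by simp [hgrad]⟩)
  omega

/-! ### Curves of degree `q + 1` -/

/-- Each point of the curve picks a tangent line, and a line is picked by at most as many points as
it has points off the curve. -/
theorem card_zeroPoints_le_of_degree_card_add_one (hno : NoLinearFactor f)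
    (hf : f.IsHomogeneous (Fintype.card F + 1)) : #(zeroPoints f) ≤ Fintype.card F ^ 2 + 1 := by
  classical
  choose! T hT using fun P ↦ exists_mem_tangencyPoints (P := P) hf
  have hfiber (l : ProjPlane F) :
      #{P ∈ zeroPoints f | T P = l} ≤ #(pointsOn (nonzeroPoints f) l) := by
    have hsub : {P ∈ zeroPoints f | T P = l} ⊆ tangencyPoints f l := fun P hP ↦ by
      obtain ⟨hPf, rfl⟩ := mem_filter.1 hP
      exact hT P hPf
    have := card_le_card hsub
    have := card_pointsOn_add_card_tangencyPoints_le hno hf l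
    have := card_pointsOn_zeroPoints_add_nonzeroPoints f l
    omega
  have hsum : #(zeroPoints f) ≤ #(nonzeroPoints f) * (Fintype.card F + 1) := by
    rw [← order_projPlane, ← sum_card_pointsOn (L := ProjPlane F),
      card_eq_sum_card_fiberwise (f := T) (t := univ) fun P _ ↦ mem_univ _]
    exact sum_le_sum fun l _ ↦ hfiber l
  have := card_zeroPoints_add_card_nonzeroPoints f
  nlinarith

end PlanePoints

section ProjectiveSums

open Projectivization Finset
open scoped LinearAlgebra.Projectivization

variable {F : Type*} [Field F]

lemma sum_erase_zero_eq_sum_smul_rep {V M : Type*} [AddCommGroup V] [Module F V] [Fintype V]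
    [DecidableEq V] [Fintype Fˣ] [Fintype (ℙ F V)] [AddCommMonoid M] (φ : V → M) :
    ∑ x ∈ univ.erase 0, φ x = ∑ X : ℙ F V, ∑ a : Fˣ, φ (a • X.rep) := by
  rw [← Fintype.sum_prod_type']
  symm
  refine sum_bij (fun y _ ↦ y.2 • y.1.rep) ?_ ?_ ?_ fun _ _ ↦ rfl
  · intro y _
    simp [y.1.rep_nonzero, Units.smul_def]
  · rintro ⟨X, a⟩ _ ⟨Y, b⟩ _ h
    obtain rfl : X = Y := by
      rw [← X.mk_rep, ← Y.mk_rep, mk_eq_mk_iff]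
      exact ⟨a⁻¹ * b, by rw [mul_smul, ← h, inv_smul_smul]⟩
    exact Prod.ext rfl (Units.ext (smul_left_injective F X.rep_nonzero h))
  · intro x hx
    obtain ⟨a, ha⟩ := exists_smul_eq_mk_rep F x (ne_of_mem_erase hx)
    exact ⟨(mk F x (ne_of_mem_erase hx), a⁻¹), mem_univ _, by rw [← ha, inv_smul_smul]⟩

variable [Fintype F]

lemma eval_smul_of_card_sub_one_dvd {ι : Type*} {g : MvPolynomial ι F} {e : ℕ}
    (hg : g.IsHomogeneous e) (hdvd : Fintype.card F - 1 ∣ e) {a : F} (ha : a ≠ 0) (x : ι → F) :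
    eval (a • x) g = eval x g := by
  obtain ⟨m, rfl⟩ := hdvd
  rw [eval_smul_of_isHomogeneous hg, pow_mul, FiniteField.pow_card_sub_one_eq_one a ha, one_pow,
    one_mul]

/-- A Chevalley--Warning argument: the sum over all vectors vanishes, and on nonzero vectors the
value depends only on the projective point. -/
lemma sum_projectivization_eval_rep_eq_zero {ι : Type*} [Fintype ι] [Fintype (ℙ F (ι → F))]
    {g : MvPolynomial ι F} {e : ℕ} (hg : g.IsHomogeneous e) (hdvd : Fintype.card F - 1 ∣ e)
    (he : e ≠ 0) (hlt : e < (Fintype.card F - 1) * Fintype.card ι) :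
    ∑ X : ℙ F (ι → F), eval X.rep g = 0 := by
  classical
  have hzero : eval (0 : ι → F) g = 0 := by
    simpa [he] using eval_smul_of_isHomogeneous hg 0 (0 : ι → F)
  have hunit (a : Fˣ) (x : ι → F) : eval (a • x) g = eval x g :=
    eval_smul_of_card_sub_one_dvd hg hdvd a.ne_zero x
  have hsum := sum_eval_eq_zero g (hg.totalDegree_le.trans_lt hlt)
  rw [← add_sum_erase _ _ (mem_univ 0), hzero, zero_add,
    sum_erase_zero_eq_sum_smul_rep (F := F)] at hsum
  simpa [hunit, ← mul_sum, Fintype.card_units, Nat.cast_sub Fintype.card_pos] using hsum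

end ProjectiveSums

/-! ### Curves of degree `q` -/

section DegreeCard

open Configuration ProjectivePlane Projectivization Finset

variable {F : Type*} [Field F]

lemma eval_rep_linearForm_rep_eq_zero_iff (X l : ProjPlane F) :
    eval X.rep (linearForm l.rep) = 0 ↔ X ∈ l := by
  rw [eval_linearForm, dotProduct_comm, ← mem_iff_dotProduct_rep]

variable [Fintype F] {f : MvPolynomial (Fin 3) F}

lemma isCayleyBacharach_nonzeroPoints (hf : f.IsHomogeneous (Fintype.card F)) :
    IsCayleyBacharach (ProjPlane F) (Fintype.card F - 2) (nonzeroPoints f) := by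
  classical
  intro R hR T hT hcover
  by_contra! hRT
  have hq : 1 < Fintype.card F := Fintype.one_lt_card
  obtain ⟨X, -, hXR⟩ := exists_mem_line_ne R R
  obtain ⟨m, -, hRm⟩ := exists_mem_notMem (L := ProjPlane F) X R hXR
  set g := f * (∏ l ∈ T, linearForm l.rep) * linearForm m.rep ^ (Fintype.card F - 2 - #T) with hg
  have hgh : g.IsHomogeneous ((Fintype.card F - 1) * 2) := by
    have hprod := IsHomogeneous.prod T _ _ fun l _ ↦ isHomogeneous_linearForm (R := F) l.rep
    convert (hf.mul hprod).mul ((isHomogeneous_linearForm m.rep).pow _) using 1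
    simp only [sum_const, smul_eq_mul]
    omega
  have hsum :=
    sum_projectivization_eval_rep_eq_zero hgh (Dvd.intro _ rfl) (by omega) (by simp; omega)
  rw [sum_eq_single_of_mem R (mem_univ R)] at hsum
  · simp only [hg, map_mul, map_prod, map_pow, mul_eq_zero, prod_eq_zero_iff, pow_eq_zero_iff',
      eval_rep_linearForm_rep_eq_zero_iff] at hsum
    obtain (hfR | ⟨l, hl, hRl⟩) | ⟨hRm', -⟩ := hsum
    · exact mem_nonzeroPoints.1 hR hfR
    · exact hRT l hl hRl
    · exact hRm hRm'
  · intro Y _ hYR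
    simp only [hg, map_mul, map_prod, mul_eq_zero, prod_eq_zero_iff,
      eval_rep_linearForm_rep_eq_zero_iff]
    by_cases hY : eval Y.rep f = 0
    · exact Or.inl (Or.inl hY)
    · exact Or.inl (Or.inr (hcover Y (mem_nonzeroPoints.2 hY) hYR))

lemma isBlockingSet_nonzeroPoints (hno : NoLinearFactor f) (hf : f.IsHomogeneous (Fintype.card F)) :
    IsBlockingSet (ProjPlane F) (nonzeroPoints f) := by
  intro l
  have := card_pointsOn_zeroPoints_le hno hf l
  have := card_pointsOn_zeroPoints_add_nonzeroPoints f l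
  exact card_pos.1 (by omega)

lemma exists_secant_nonzeroPoints (hno : NoLinearFactor f) (hf : f.IsHomogeneous (Fintype.card F))
    {X : ProjPlane F} (hX : X ∉ nonzeroPoints f) :
    ∃ l : ProjPlane F, X ∈ l ∧ 1 < #(pointsOn (nonzeroPoints f) l) := by
  obtain ⟨l, hl⟩ := exists_mem_tangencyPoints hf (P := X) (by simpa using hX)
  refine ⟨l, (mem_tangencyPoints.1 hl).1.2, ?_⟩
  have := card_pointsOn_zeroPoints_lt_of_tangent hno hf hl
  have := card_pointsOn_zeroPoints_add_nonzeroPoints f l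
  omega

theorem card_eq_four_of_degree_card (hno : NoLinearFactor f)
    (hf : f.IsHomogeneous (Fintype.card F))
    (hcard : (Fintype.card F - 1) * Fintype.card F + 1 < #(zeroPoints f)) :
    Fintype.card F = 4 ∧ #(nonzeroPoints f) = 7 ∧
      ∀ l : ProjPlane F,
        #(pointsOn (nonzeroPoints f) l) = 1 ∨ #(pointsOn (nonzeroPoints f) l) = 3 := by
  classical
  have hsmall : #(nonzeroPoints f) + 1 ≤ 2 * Fintype.card F := by
    have htotal := card_zeroPoints_add_card_nonzeroPoints f
    obtain ⟨k, hk⟩ := Nat.exists_eq_add_of_le' (Fintype.card_pos (α := F))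
    rw [hk] at htotal hcard ⊢
    rw [Nat.add_sub_cancel] at hcard
    nlinarith
  have horder := order_projPlane (F := F)
  rw [← horder]
  exact (isBlockingSet_nonzeroPoints hno hf).order_eq_four
    (by rw [horder]; exact isCayleyBacharach_nonzeroPoints hf) (by rwa [horder])
    fun X hX ↦ exists_secant_nonzeroPoints hno hf hX

end DegreeCard

/-! ### The exceptional quartic -/

section SevenPoints

open Configuration Finset

lemma eq_or_eq_or_eq_of_mem_of_card_eq_three {α : Type*} {s : Finset α} (hs : #s = 3)
    {u x y z : α} (hu : u ∈ s) (hx : x ∈ s) (hy : y ∈ s) (hux : u ≠ x) (huy : u ≠ y) (hxy : x ≠ y)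
    (hz : z ∈ s) : z = u ∨ z = x ∨ z = y := by
  classical
  have huxy : {u, x, y} = s := eq_of_subset_of_card_le (by simp [insert_subset_iff, hu, hx, hy])
    (by rw [hs, card_eq_three.2 ⟨u, x, y, hux, huy, hxy, rfl⟩])
  simpa [← huxy] using hz

lemma card_pointsOn_eq_three {P L : Type*} [Membership P L] {S : Finset P}
    (hS : ∀ l : L, #(pointsOn S l) = 1 ∨ #(pointsOn S l) = 3)
    {X Y : P} {l : L} (h : X ≠ Y) (hX : X ∈ pointsOn S l) (hY : Y ∈ pointsOn S l) :
    #(pointsOn S l) = 3 :=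
  (hS l).resolve_left (one_lt_card.2 ⟨X, hX, Y, hY, h⟩).ne'

variable {P L : Type*} [Membership P L] [ProjectivePlane P L] {S : Finset P}

open scoped Classical in
lemma card_trisecants_eq_three [Fintype L] (hcard : #S = 7)
    (hS : ∀ l : L, #(pointsOn S l) = 1 ∨ #(pointsOn S l) = 3) {U : P} (hU : U ∈ S) :
    #{l : L | U ∈ l ∧ #(pointsOn S l) = 3} = 3 := by
  have hcount := card_mul_eq_card_mul (s := S.erase U)
    (t := {l : L | U ∈ l ∧ #(pointsOn S l) = 3}) (fun X l ↦ X ∈ l) (m := 1) (n := 2) ?_ ?_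
  · rw [card_erase_of_mem hU, hcard] at hcount
    omega
  · intro X hX
    obtain ⟨hXU, hXS⟩ := mem_erase.1 hX
    rw [bipartiteAbove, filter_filter, ← card_filter_mem_mem_line (L := L) hXU]
    congr 1
    refine filter_congr fun l _ ↦ ⟨fun h ↦ ⟨h.2, h.1.1⟩, fun h ↦ ⟨⟨h.2, ?_⟩, h.1⟩⟩
    exact card_pointsOn_eq_three hS hXU (by simp [hXS, h.1]) (by simp [hU, h.2])
  · intro l hl
    obtain ⟨hUl, hl⟩ := (mem_filter.1 hl).2
    rw [bipartiteBelow, filter_erase, ← pointsOn, card_erase_of_mem (by simp [hU, hUl]), hl]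

lemma exists_two_lines_through [Finite L] (hcard : #S = 7)
    (hS : ∀ l : L, #(pointsOn S l) = 1 ∨ #(pointsOn S l) = 3) {l : L} {U X Y : P}
    (hU : U ∈ pointsOn S l) (hX : X ∈ pointsOn S l) (hY : Y ∈ pointsOn S l) (hUX : U ≠ X)
    (hUY : U ≠ Y) (hXY : X ≠ Y) :
    ∃ m m' : L, U ∈ m ∧ U ∈ m' ∧ X ∉ m ∧ X ∉ m' ∧ ∀ Z ∈ S, Z = X ∨ Z = Y ∨ Z ∈ m ∨ Z ∈ m' := by
  classical
  have := Fintype.ofFinite L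
  have hl := card_pointsOn_eq_three hS hXY hX hY
  obtain ⟨hUS, hUl⟩ := mem_pointsOn.1 hU
  set T : Finset L := {l : L | U ∈ l ∧ #(pointsOn S l) = 3} with hT
  have hlT : l ∈ T := by simp [hT, hUl, hl]
  obtain ⟨m, m', -, hmm⟩ := card_eq_two.1
    (by rw [card_erase_of_mem hlT, card_trisecants_eq_three hcard hS hUS] : #(T.erase l) = 2)
  have hmem (k : L) (hk : k ∈ ({m, m'} : Finset L)) : U ∈ k ∧ X ∉ k := by
    rw [← hmm, mem_erase, hT, mem_filter] at hk
    refine ⟨hk.2.2.1, fun hXk ↦ hk.1 ?_⟩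
    exact line_unique hUX hk.2.2.1 hXk hUl (mem_pointsOn.1 hX).2
  have hm := hmem m (by simp)
  have hm' := hmem m' (by simp)
  refine ⟨m, m', hm.1, hm'.1, hm.2, hm'.2, fun Z hZ ↦ ?_⟩
  obtain rfl | hZU := eq_or_ne Z U
  · exact Or.inr (Or.inr (Or.inl hm.1))
  obtain ⟨k, hZk, hUk⟩ := exists_line_through (L := L) Z U hZU
  obtain rfl | hkl := eq_or_ne k l
  · have := eq_or_eq_or_eq_of_mem_of_card_eq_three hl hU hX hY hUX hUY hXY
      (mem_pointsOn.2 ⟨hZ, hZk⟩)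
    tauto
  · have hk : k ∈ T.erase l := by
      rw [mem_erase, hT, mem_filter]
      exact ⟨hkl, mem_univ k, hUk, card_pointsOn_eq_three hS hZU (by simp [hZ, hZk])
        (by simp [hUS, hUk])⟩
    rw [hmm, mem_insert, mem_singleton] at hk
    obtain rfl | rfl := hk <;> simp [hZk]

lemma exists_third_point (hS : ∀ l : L, #(pointsOn S l) = 1 ∨ #(pointsOn S l) = 3) {X Y : P}
    (h : X ≠ Y) (hX : X ∈ S) (hY : Y ∈ S) :
    ∃ U ∈ S, U ≠ X ∧ U ≠ Y ∧ ∃ l : L, X ∈ l ∧ Y ∈ l ∧ U ∈ l := by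
  classical
  obtain ⟨l, hXl, hYl⟩ := exists_line_through (L := L) X Y h
  have hcard := card_pointsOn_eq_three hS h (mem_pointsOn.2 ⟨hX, hXl⟩) (mem_pointsOn.2 ⟨hY, hYl⟩)
  obtain ⟨U, hU, hXY⟩ := exists_mem_notMem_of_card_lt_card
    (s := {X, Y}) (t := pointsOn S l) (card_le_two.trans_lt (by omega))
  rw [mem_insert, mem_singleton, not_or] at hXY
  obtain ⟨hUS, hUl⟩ := mem_pointsOn.1 hU
  exact ⟨U, hUS, hXY.1, hXY.2, l, hXl, hYl, hUl⟩

lemma exists_triangle (hS : ∀ l : L, #(pointsOn S l) < #S) (hcard : 2 ≤ #S) :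
    ∃ X ∈ S, ∃ Y ∈ S, ∃ Z ∈ S, X ≠ Y ∧ ∀ l : L, X ∈ l → Y ∈ l → Z ∉ l := by
  obtain ⟨X, hX, Y, hY, hXY⟩ := one_lt_card.1 hcard
  obtain ⟨l, hXl, hYl⟩ := exists_line_through (L := L) X Y hXY
  obtain ⟨Z, hZ, hZl⟩ := exists_mem_notMem_of_card_lt_card (hS l)
  refine ⟨X, hX, Y, hY, Z, hZ, hXY, fun m hXm hYm hZm ↦ hZl ?_⟩
  rw [line_unique hXY hXl hYl hXm hYm]
  exact mem_pointsOn.2 ⟨hZ, hZm⟩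

end SevenPoints

section FieldOfFourElements

variable {F : Type*} [Field F] [Fintype F]

lemma two_eq_zero_of_card_eq_four (h4 : Fintype.card F = 4) : (2 : F) = 0 := by
  have h : ((4 : ℕ) : F) = 0 := h4 ▸ FiniteField.cast_card_eq_zero F
  have h22 : (2 : F) * 2 = 0 := by
    rw [← h]
    norm_num
  exact mul_self_eq_zero.1 h22

lemma pow_four_eq_self (h4 : Fintype.card F = 4) (a : F) : a ^ 4 = a :=
  h4 ▸ FiniteField.pow_card a

lemma pow_three_eq_one (h4 : Fintype.card F = 4) {a : F} (ha : a ≠ 0) : a ^ 3 = 1 := by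
  simpa [h4] using FiniteField.pow_card_sub_one_eq_one a ha

lemma sq_add_mul_add_sq_eq_zero (h4 : Fintype.card F = 4) {a b : F} (ha : a ≠ 0) (hb : b ≠ 0)
    (hab : a ≠ b) : a ^ 2 + a * b + b ^ 2 = 0 := by
  refine (mul_eq_zero.1 (?_ : (a - b) * _ = 0)).resolve_left (sub_ne_zero.2 hab)
  linear_combination pow_three_eq_one h4 ha - pow_three_eq_one h4 hb

end FieldOfFourElements

section FanoQuartic

open Configuration Projectivization Finset

variable {F : Type*} [Field F] {f : MvPolynomial (Fin 3) F}

lemma eval_zero_of_isHomogeneous {d : ℕ} (hf : f.IsHomogeneous d) (hd : d ≠ 0) :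
    eval 0 f = 0 := by
  simpa [-eval_zero, hd] using eval_smul_of_isHomogeneous hf 0 (0 : Fin 3 → F)

lemma ne_zero_of_eval_eq_one {d : ℕ} (hf : f.IsHomogeneous d) (hd : d ≠ 0) {x : Fin 3 → F}
    (hx : eval x f = 1) : x ≠ 0 := by
  rintro rfl
  exact zero_ne_one ((eval_zero_of_isHomogeneous hf hd).symm.trans hx)

variable [Fintype F]

/-- A quartic form whose nonzero points form a set of seven points meeting each line in one or
three points. Over the field with four elements, such a set is a Fano subplane. -/
structure IsFanoQuartic (f : MvPolynomial (Fin 3) F) : Prop where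
  isHomogeneous : f.IsHomogeneous 4
  card_nonzeroPoints : #(nonzeroPoints f) = 7
  card_pointsOn (l : ProjPlane F) :
    #(pointsOn (nonzeroPoints f) l) = 1 ∨ #(pointsOn (nonzeroPoints f) l) = 3

lemma mk_mem_nonzeroPoints {d : ℕ} (hf : f.IsHomogeneous d) {x : Fin 3 → F} (hx : x ≠ 0) :
    mk F x hx ∈ nonzeroPoints f ↔ eval x f ≠ 0 := by
  rw [mem_nonzeroPoints, Ne, eval_rep_mk_eq_zero_iff hf hx]

lemma eval_smul_of_card_eq_four (h4 : Fintype.card F = 4) (hf : f.IsHomogeneous 4) (a : F)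
    (x : Fin 3 → F) : eval (a • x) f = a * eval x f := by
  rw [eval_smul_of_isHomogeneous hf, pow_four_eq_self h4]

/-- As `a ^ 4 = a` over the field with four elements, a quartic form scales like its argument. -/
lemma mk_eq_mk_iff_of_eval_eq_one (h4 : Fintype.card F = 4) (hf : f.IsHomogeneous 4)
    {x y : Fin 3 → F} (hx : eval x f = 1) (hy : eval y f = 1) (hx0 : x ≠ 0) (hy0 : y ≠ 0) :
    mk F x hx0 = mk F y hy0 ↔ x = y := by
  refine ⟨fun h ↦ ?_, fun h ↦ by simp only [h]⟩
  obtain ⟨a, rfl⟩ := (mk_eq_mk_iff' ..).1 h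
  rw [eval_smul_of_card_eq_four h4 hf, hy, mul_one] at hx
  rw [hx, one_smul]

lemma exists_eval_eq_one (h4 : Fintype.card F = 4) (hf : f.IsHomogeneous 4) {X : ProjPlane F}
    (hX : X ∈ nonzeroPoints f) : ∃ x, ∃ hx : x ≠ 0, eval x f = 1 ∧ mk F x hx = X := by
  have hX' := mem_nonzeroPoints.1 hX
  have heval : eval ((eval X.rep f)⁻¹ • X.rep) f = 1 := by
    rw [eval_smul_of_card_eq_four h4 hf, inv_mul_cancel₀ hX']
  refine ⟨_, ne_zero_of_eval_eq_one hf four_ne_zero heval, heval, ?_⟩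
  conv_rhs => rw [← X.mk_rep]
  exact (mk_eq_mk_iff' ..).2 ⟨_, rfl⟩

lemma eval_rep_mk_of_card_sub_one_dvd {g : MvPolynomial (Fin 3) F} {e : ℕ}
    (hg : g.IsHomogeneous e) (hdvd : Fintype.card F - 1 ∣ e) {x : Fin 3 → F} (hx : x ≠ 0) :
    eval (mk F x hx).rep g = eval x g := by
  obtain ⟨a, ha⟩ := exists_smul_eq_mk_rep F x hx
  rw [← ha, Units.smul_def, eval_smul_of_card_sub_one_dvd hg hdvd a.ne_zero]

/-- The form `f` times the two lines is nonzero at `mk x` and `mk y` only. -/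
lemma dotProduct_mul_add_dotProduct_mul_eq_zero (h4 : Fintype.card F = 4)
    (hf : f.IsHomogeneous 4) {x y : Fin 3 → F} (hx : eval x f = 1) (hy : eval y f = 1)
    {hx0 : x ≠ 0} {hy0 : y ≠ 0} (hxy : x ≠ y) {m m' : ProjPlane F}
    (hcover : ∀ Z ∈ nonzeroPoints f, Z = mk F x hx0 ∨ Z = mk F y hy0 ∨ Z ∈ m ∨ Z ∈ m') :
    (x ⬝ᵥ m.rep) * (x ⬝ᵥ m'.rep) + (y ⬝ᵥ m.rep) * (y ⬝ᵥ m'.rep) = 0 := by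
  classical
  set g := f * linearForm m.rep * linearForm m'.rep
  have hg : g.IsHomogeneous 6 :=
    (hf.mul (isHomogeneous_linearForm _)).mul (isHomogeneous_linearForm _)
  have hdvd : Fintype.card F - 1 ∣ 6 := by rw [h4]; norm_num
  have hsum := sum_projectivization_eval_rep_eq_zero hg hdvd (by norm_num) (by simp [h4])
  rw [Fintype.sum_eq_add _ _ ((mk_eq_mk_iff_of_eval_eq_one h4 hf hx hy hx0 hy0).not.2 hxy),
    eval_rep_mk_of_card_sub_one_dvd hg hdvd, eval_rep_mk_of_card_sub_one_dvd hg hdvd] at hsum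
  · simpa only [g, map_mul, hx, hy, one_mul, eval_linearForm, dotProduct_comm _ x,
      dotProduct_comm _ y] using hsum
  · intro Z hZ
    simp only [g, map_mul, mul_eq_zero, eval_rep_linearForm_rep_eq_zero_iff]
    by_cases hfZ : eval Z.rep f = 0
    · exact Or.inl (Or.inl hfZ)
    · have := hcover Z (mem_nonzeroPoints.2 hfZ)
      tauto

namespace IsFanoQuartic

lemma coeff_eq_of_collinear (hf : IsFanoQuartic f) (h4 : Fintype.card F = 4)
    {x y u : Fin 3 → F} {a b : F} (hx : eval x f = 1) (hy : eval y f = 1) (hu : eval u f = 1)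
    (hux : u ≠ x) (huy : u ≠ y) (hxy : x ≠ y) (hxyu : u = a • x + b • y) : a = b := by
  classical
  have hfh := hf.isHomogeneous
  have hx0 := ne_zero_of_eval_eq_one hfh four_ne_zero hx
  have hy0 := ne_zero_of_eval_eq_one hfh four_ne_zero hy
  have hu0 := ne_zero_of_eval_eq_one hfh four_ne_zero hu
  have hXY := (mk_eq_mk_iff_of_eval_eq_one h4 hfh hx hy hx0 hy0).not.2 hxy
  have hmem {v} (hv0 : v ≠ 0) (hv : eval v f = 1) := (mk_mem_nonzeroPoints hfh hv0).2 (by simp [hv])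
  obtain ⟨l, hXl, hYl⟩ := exists_line_through (L := ProjPlane F) _ _ hXY
  have hUl : Projectivization.mk F u hu0 ∈ l := by
    rw [mk_mem_iff] at hXl hYl ⊢
    simp only [hxyu, add_dotProduct, smul_dotProduct, hXl, hYl, smul_zero, add_zero]
  obtain ⟨m, m', hUm, hUm', hXm, hXm', hcover⟩ := exists_two_lines_through hf.card_nonzeroPoints
    hf.card_pointsOn (mem_pointsOn.2 ⟨hmem hu0 hu, hUl⟩) (mem_pointsOn.2 ⟨hmem hx0 hx, hXl⟩)
    (mem_pointsOn.2 ⟨hmem hy0 hy, hYl⟩)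
    ((mk_eq_mk_iff_of_eval_eq_one h4 hfh hu hx hu0 hx0).not.2 hux)
    ((mk_eq_mk_iff_of_eval_eq_one h4 hfh hu hy hu0 hy0).not.2 huy) hXY
  have hsum := dotProduct_mul_add_dotProduct_mul_eq_zero h4 hfh hx hy hxy hcover
  rw [mk_mem_iff] at hUm hUm' hXm hXm'
  simp only [hxyu, add_dotProduct, smul_dotProduct, smul_eq_mul] at hUm hUm'
  have h2 := two_eq_zero_of_card_eq_four h4
  have hprod : (a - b) ^ 2 * ((x ⬝ᵥ m.rep) * (x ⬝ᵥ m'.rep)) = 0 := by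
    linear_combination a * (x ⬝ᵥ m'.rep) * hUm - b * (y ⬝ᵥ m.rep) * hUm' + b ^ 2 * hsum -
      a * b * (x ⬝ᵥ m.rep) * (x ⬝ᵥ m'.rep) * h2
  simpa [sub_eq_zero, hXm, hXm'] using hprod

lemma eval_add (hf : IsFanoQuartic f) (h4 : Fintype.card F = 4)
    {x y : Fin 3 → F} (hx : eval x f = 1) (hy : eval y f = 1) (hxy : x ≠ y) :
    eval (x + y) f = 1 := by
  classical
  have hfh := hf.isHomogeneous
  have hx0 := ne_zero_of_eval_eq_one hfh four_ne_zero hx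
  have hy0 := ne_zero_of_eval_eq_one hfh four_ne_zero hy
  have hXY := (mk_eq_mk_iff_of_eval_eq_one h4 hfh hx hy hx0 hy0).not.2 hxy
  obtain ⟨U, hU, hUX, hUY, l, hXl, hYl, hUl⟩ := exists_third_point hf.card_pointsOn hXY
    ((mk_mem_nonzeroPoints hfh hx0).2 (hx ▸ one_ne_zero))
    ((mk_mem_nonzeroPoints hfh hy0).2 (hy ▸ one_ne_zero))
  obtain ⟨u, hu0, hu, rfl⟩ := exists_eval_eq_one h4 hfh hU
  rw [Ne, mk_eq_mk_iff_of_eval_eq_one h4 hfh hu (by assumption)] at hUX hUY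
  rw [mk_mem_iff] at hXl hYl hUl
  obtain ⟨a, b, hab⟩ := exists_eq_smul_add_smul l.rep_nonzero hUl hXl hYl
    ((mk_eq_mk_iff_crossProduct_eq_zero hx0 hy0).not.1 hXY)
  obtain rfl := hf.coeff_eq_of_collinear h4 hx hy hu hUX hUY hxy hab
  have ha : a ≠ 0 := by
    rintro rfl
    exact hu0 (by simp [hab])
  have hxu : x = a⁻¹ • u + (1 : F) • y := by
    rw [hab, ← smul_add, smul_smul, inv_mul_cancel₀ ha, one_smul, one_smul, add_assoc, ← two_smul F,
      two_eq_zero_of_card_eq_four h4, zero_smul, add_zero]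
  have ha1 := hf.coeff_eq_of_collinear h4 hu hy hx (Ne.symm hUX) hxy hUY hxu
  rw [inv_eq_one.1 ha1, one_smul, one_smul] at hab
  exact hab ▸ hu

end IsFanoQuartic

end FanoQuartic

section LinearSubst

open Matrix

variable {R : Type*} [CommRing R]

/-- The substitution `x ↦ M x` of the variables of a ternary polynomial. -/
def linearSubst (M : Matrix (Fin 3) (Fin 3) R) :
    MvPolynomial (Fin 3) R →ₐ[R] MvPolynomial (Fin 3) R :=
  bind₁ fun i ↦ linearForm (M i)

lemma eval_linearSubst (M : Matrix (Fin 3) (Fin 3) R) (x : Fin 3 → R)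
    (f : MvPolynomial (Fin 3) R) : eval x (linearSubst M f) = eval (M *ᵥ x) f := by
  simp only [← aeval_eq_eval, linearSubst, aeval_bind₁]
  simp only [aeval_eq_eval, eval_linearForm]
  rfl

lemma isHomogeneous_linearSubst (M : Matrix (Fin 3) (Fin 3) R) {f : MvPolynomial (Fin 3) R}
    {d : ℕ} (hf : f.IsHomogeneous d) : (linearSubst M f).IsHomogeneous d := by
  simpa [linearSubst] using hf.aeval _ fun i ↦ isHomogeneous_linearForm (M i)

lemma linearSubst_linearForm (M : Matrix (Fin 3) (Fin 3) R) (l : Fin 3 → R) :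
    linearSubst M (linearForm l) = linearForm (l ᵥ* M) := by
  simp only [linearSubst, linearForm, vecMul, dotProduct, map_sum, map_mul, bind₁_C_right,
    bind₁_X_right, Finset.mul_sum, Finset.sum_mul, mul_assoc]
  exact Finset.sum_comm

lemma linearSubst_linearSubst (M N : Matrix (Fin 3) (Fin 3) R) (f : MvPolynomial (Fin 3) R) :
    linearSubst M (linearSubst N f) = linearSubst (N * M) f := by
  have (i : Fin 3) : bind₁ (fun j ↦ linearForm (M j)) (linearForm (N i)) =
      linearForm ((N * M) i) := linearSubst_linearForm M (N i)
  simp only [linearSubst, bind₁_bind₁, this]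

lemma linearForm_one_row (i : Fin 3) : linearForm ((1 : Matrix (Fin 3) (Fin 3) R) i) = X i := by
  simp [linearForm, one_apply]

lemma linearSubst_one (f : MvPolynomial (Fin 3) R) : linearSubst 1 f = f := by
  simp only [linearSubst, linearForm_one_row, bind₁_X_left, AlgHom.id_apply]

end LinearSubst

section ChangeOfCoordinates

open Matrix Finset

variable {F : Type*} [Field F] [Fintype F] {M : Matrix (Fin 3) (Fin 3) F}
  {f : MvPolynomial (Fin 3) F} {d : ℕ}

lemma card_nonzeroPoints_linearSubst (hM : IsUnit M.det) (hf : f.IsHomogeneous d) :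
    #(nonzeroPoints (linearSubst M f)) = #(nonzeroPoints f) := by
  have hinj : Function.Injective M.mulVecLin :=
    mulVec_injective_of_isUnit ((isUnit_iff_isUnit_det M).2 hM)
  have hmap := Projectivization.map_injective M.mulVecLin hinj
  refine card_bijective _ (Finite.injective_iff_bijective.1 hmap) fun X ↦ ?_
  conv_rhs => rw [← X.mk_rep, Projectivization.map_mk, mk_mem_nonzeroPoints hf]
  rw [mem_nonzeroPoints, eval_linearSubst, mulVecLin_apply]

end ChangeOfCoordinates

section HommaKimQuartic

open Finset Projectivization

variable {F : Type} [Field F]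

lemma isHomogeneous_hommaKimQuartic : (hommaKimQuartic F).IsHomogeneous 4 := by
  have hX : ∀ i, (X i : MvPolynomial (Fin 3) F).IsHomogeneous 1 := isHomogeneous_X F
  unfold hommaKimQuartic
  have h4 (i : Fin 3) := (hX i).pow 4
  have h2 (i j : Fin 3) := ((hX i).pow 2).mul ((hX j).pow 2)
  exact ((((((((h4 0).add (h4 1)).add (h4 2)).add (h2 0 1)).add (h2 1 2)).add (h2 2 0)).add
    ((((hX 0).pow 2).mul (hX 1)).mul (hX 2))).add
    (((hX 0).mul ((hX 1).pow 2)).mul (hX 2))).add (((hX 0).mul (hX 1)).mul ((hX 2).pow 2))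

/-- The indicator vector of a set of coordinates. -/
def zeroOneVec (F : Type) [Field F] (s : Finset (Fin 3)) : Fin 3 → F :=
  fun i ↦ if i ∈ s then 1 else 0

lemma zeroOneVec_singleton (i : Fin 3) : zeroOneVec F {i} = Pi.single i 1 := by
  ext j
  simp [zeroOneVec, Pi.single_apply]

lemma zeroOneVec_cons (i : Fin 3) (s : Finset (Fin 3)) (h : i ∉ s) :
    zeroOneVec F (s.cons i h) = Pi.single i 1 + zeroOneVec F s := by
  ext j
  by_cases hj : j = i <;> simp [zeroOneVec, hj, h]

lemma zeroOneVec_ne_zero {s : Finset (Fin 3)} (hs : s.Nonempty) : zeroOneVec F s ≠ 0 := by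
  obtain ⟨i, hi⟩ := hs
  exact Function.ne_iff.2 ⟨i, by simp [zeroOneVec, hi]⟩

lemma zeroOneVec_injective_of_smul {a : F} {s t : Finset (Fin 3)} (hs : s.Nonempty)
    (h : a • zeroOneVec F t = zeroOneVec F s) : t = s := by
  have ha : a ≠ 0 := by
    rintro rfl
    exact zeroOneVec_ne_zero hs (by rw [← h, zero_smul])
  ext i
  have := congrFun h i
  simp only [zeroOneVec, Pi.smul_apply, smul_eq_mul] at this
  by_cases hi : i ∈ s <;> by_cases hj : i ∈ t <;> simp_all

/-- The points with all coordinates in `{0, 1}`, indexed by their supports. -/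
def zeroOnePoint (F : Type) [Field F] : {s : Finset (Fin 3) // s.Nonempty} ↪ ProjPlane F where
  toFun s := mk F (zeroOneVec F s) (zeroOneVec_ne_zero s.2)
  inj' s t h := by
    obtain ⟨a, ha⟩ := (mk_eq_mk_iff' ..).1 h
    exact (Subtype.ext (zeroOneVec_injective_of_smul s.2 ha)).symm

lemma eval_zeroOneVec_hommaKimQuartic (h2 : (2 : F) = 0) {s : Finset (Fin 3)}
    (hs : s.Nonempty) : eval (zeroOneVec F s) (hommaKimQuartic F) = 1 := by
  have hs' : 0 ∈ s ∨ 1 ∈ s ∨ 2 ∈ s := by simpa [Finset.Nonempty, Fin.exists_fin_succ] using hs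
  by_cases h0 : 0 ∈ s <;> by_cases h1 : 1 ∈ s <;> by_cases h2 : 2 ∈ s <;>
    simp_all [hommaKimQuartic, zeroOneVec] <;> grind

lemma card_map_zeroOnePoint : #(univ.map (zeroOnePoint F)) = 7 := by
  rw [card_map]
  decide

variable [Fintype F]

lemma eval_hommaKimQuartic_eq_zero (h4 : Fintype.card F = 4) {x : Fin 3 → F} {i j : Fin 3}
    (hi : x i ≠ 0) (hj : x j ≠ 0) (hij : x i ≠ x j) : eval x (hommaKimQuartic F) = 0 := by
  have key {a b : F} (ha : a ≠ 0) (hb : b ≠ 0) (hab : a ≠ b) (c : F) :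
      a ^ 4 + b ^ 4 + c ^ 4 + a ^ 2 * b ^ 2 + b ^ 2 * c ^ 2 + c ^ 2 * a ^ 2 +
        a ^ 2 * b * c + a * b ^ 2 * c + a * b * c ^ 2 = 0 := by
    linear_combination (a ^ 2 + a * b + b ^ 2 + c ^ 2 + b * c) *
        sq_add_mul_add_sq_eq_zero h4 ha hb hab + pow_four_eq_self h4 c -
      c * pow_three_eq_one h4 hb -
      (a ^ 2 * b ^ 2 + a ^ 3 * b + a * b ^ 3) * two_eq_zero_of_card_eq_four h4
  simp only [hommaKimQuartic, map_add, map_mul, map_pow, eval_X]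
  have key := key hi hj hij
  fin_cases i <;> fin_cases j <;> simp only [Fin.zero_eta, Fin.mk_one, Fin.reduceFinMk] at hij key
  all_goals first
    | exact absurd rfl hij
    | linear_combination key (x 0)
    | linear_combination key (x 1)
    | linear_combination key (x 2)

lemma exists_eq_smul_zeroOneVec (h4 : Fintype.card F = 4) {x : Fin 3 → F}
    (hx : eval x (hommaKimQuartic F) ≠ 0) :
    ∃ a : F, ∃ s : Finset (Fin 3), s.Nonempty ∧ x = a • zeroOneVec F s := by
  classical
  obtain ⟨i, hi⟩ : ∃ i, x i ≠ 0 := by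
    refine Function.ne_iff.1 fun h0 : x = 0 ↦ hx ?_
    simp [h0, hommaKimQuartic]
  refine ⟨x i, ({j | x j ≠ 0} : Finset (Fin 3)), ⟨i, by simpa using hi⟩, ?_⟩
  ext j
  by_cases hj : x j = 0
  · simp [zeroOneVec, hj]
  · have hij : x i = x j := by_contra fun h ↦ hx (eval_hommaKimQuartic_eq_zero h4 hi hj h)
    simp [zeroOneVec, hj, hij]

lemma exists_zeroOnePoint_eq (h4 : Fintype.card F = 4) {X : ProjPlane F}
    (hX : X ∈ nonzeroPoints (hommaKimQuartic F)) : ∃ s, zeroOnePoint F s = X := by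
  obtain ⟨a, s, hs, has⟩ := exists_eq_smul_zeroOneVec h4 (mem_nonzeroPoints.1 hX)
  refine ⟨⟨s, hs⟩, ?_⟩
  conv_rhs => rw [← X.mk_rep]
  exact ((mk_eq_mk_iff' ..).2 ⟨a, has.symm⟩).symm

lemma map_zeroOnePoint_subset {f : MvPolynomial (Fin 3) F} {d : ℕ} (hf : f.IsHomogeneous d)
    (h1 : ∀ s : Finset (Fin 3), s.Nonempty → eval (zeroOneVec F s) f = 1) :
    univ.map (zeroOnePoint F) ⊆ nonzeroPoints f := by
  intro X hX
  obtain ⟨s, -, rfl⟩ := mem_map.1 hX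
  exact (mk_mem_nonzeroPoints hf _).2 (by simp [h1 s s.2])

lemma nonzeroPoints_hommaKimQuartic (h4 : Fintype.card F = 4) :
    nonzeroPoints (hommaKimQuartic F) = univ.map (zeroOnePoint F) := by
  refine (map_zeroOnePoint_subset isHomogeneous_hommaKimQuartic fun s hs ↦
    eval_zeroOneVec_hommaKimQuartic (two_eq_zero_of_card_eq_four h4) hs).antisymm' fun X hX ↦ ?_
  simpa using exists_zeroOnePoint_eq h4 hX

lemma eq_hommaKimQuartic (h4 : Fintype.card F = 4) {f : MvPolynomial (Fin 3) F}
    (hf : f.IsHomogeneous 4) (hcard : #(nonzeroPoints f) = 7)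
    (h1 : ∀ s : Finset (Fin 3), s.Nonempty → eval (zeroOneVec F s) f = 1) :
    f = hommaKimQuartic F := by
  have hK := isHomogeneous_hommaKimQuartic (F := F)
  have hpoints : nonzeroPoints f = nonzeroPoints (hommaKimQuartic F) := by
    rw [nonzeroPoints_hommaKimQuartic h4]
    exact (eq_of_subset_of_card_le (map_zeroOnePoint_subset hf h1)
      (by rw [hcard, card_map_zeroOnePoint])).symm
  refine hf.funext_of_le_card hK (fun x ↦ ?_) (by simp [Cardinal.mk_fintype, h4])
  by_cases hx : eval x (hommaKimQuartic F) = 0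
  · rcases eq_or_ne x 0 with rfl | hx0
    · rw [eval_zero_of_isHomogeneous hf four_ne_zero, eval_zero_of_isHomogeneous hK four_ne_zero]
    · rw [hx, ← not_not (a := eval x f = 0), ← Ne, ← mk_mem_nonzeroPoints hf hx0, hpoints,
        mk_mem_nonzeroPoints hK, not_not, hx]
  · obtain ⟨a, s, hs, rfl⟩ := exists_eq_smul_zeroOneVec h4 hx
    rw [eval_smul_of_card_eq_four h4 hf, eval_smul_of_card_eq_four h4 hK, h1 s hs,
      eval_zeroOneVec_hommaKimQuartic (two_eq_zero_of_card_eq_four h4) hs]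

lemma card_zeroPoints_of_projectivelyEquivalent (h4 : Fintype.card F = 4)
    {f : MvPolynomial (Fin 3) F} (h : ProjectivelyEquivalent F f (hommaKimQuartic F)) :
    #(zeroPoints f) = 14 := by
  obtain ⟨M, hM, c, hc, rfl⟩ := h
  have hsmul : nonzeroPoints (c • linearSubst M (hommaKimQuartic F)) =
      nonzeroPoints (linearSubst M (hommaKimQuartic F)) := by
    ext X
    simp [smul_eval, hc]
  have hcard : #(nonzeroPoints (c • linearSubst M (hommaKimQuartic F))) = 7 := by
    rw [hsmul, card_nonzeroPoints_linearSubst hM isHomogeneous_hommaKimQuartic,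
      nonzeroPoints_hommaKimQuartic h4, card_map_zeroOnePoint]
  have := card_zeroPoints_add_card_nonzeroPoints (c • linearSubst M (hommaKimQuartic F))
  rw [hcard, h4] at this
  exact Nat.add_right_cancel this

namespace IsFanoQuartic

variable {f : MvPolynomial (Fin 3) F}

open Matrix

lemma exists_frame (hf : IsFanoQuartic f) (h4 : Fintype.card F = 4) :
    ∃ M : Matrix (Fin 3) (Fin 3) F, IsUnit M.det ∧ ∀ i, eval (M.col i) f = 1 := by
  classical
  have hlt (l : ProjPlane F) : #(pointsOn (nonzeroPoints f) l) < #(nonzeroPoints f) := by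
    have := hf.card_pointsOn l
    have := hf.card_nonzeroPoints
    omega
  obtain ⟨X, hX, Y, hY, Z, hZ, -, hXYZ⟩ := exists_triangle hlt (by simp [hf.card_nonzeroPoints])
  obtain ⟨x, hx0, hx, rfl⟩ := exists_eval_eq_one h4 hf.isHomogeneous hX
  obtain ⟨y, hy0, hy, rfl⟩ := exists_eval_eq_one h4 hf.isHomogeneous hY
  obtain ⟨z, hz0, hz, rfl⟩ := exists_eval_eq_one h4 hf.isHomogeneous hZ
  refine ⟨(of ![x, y, z])ᵀ, isUnit_iff_ne_zero.2 fun hdet ↦ ?_, ?_⟩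
  · obtain ⟨w, hw, hwM⟩ := exists_vecMul_eq_zero_iff.2 hdet
    rw [vecMul_transpose] at hwM
    have hw0 (i : Fin 3) : ![x, y, z] i ⬝ᵥ w = 0 := congrFun hwM i
    refine hXYZ (Projectivization.mk F w hw) ?_ ?_ ?_ <;>
      rw [Configuration.ofField.mem_iff, orthogonal_mk]
    exacts [hw0 0, hw0 1, hw0 2]
  · simpa [Fin.forall_fin_succ] using ⟨hx, hy, hz⟩

lemma eval_mulVec_zeroOneVec (hf : IsFanoQuartic f) (h4 : Fintype.card F = 4)
    {M : Matrix (Fin 3) (Fin 3) F} (hM : IsUnit M.det) (h1 : ∀ i, eval (M.col i) f = 1)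
    {s : Finset (Fin 3)} (hs : s.Nonempty) : eval (M *ᵥ zeroOneVec F s) f = 1 := by
  have hsingle (i : Fin 3) : eval (M *ᵥ Pi.single i 1) f = 1 := by rw [mulVec_single_one, h1]
  induction hs using Finset.Nonempty.cons_induction with
  | singleton i => simpa [zeroOneVec_singleton] using hsingle i
  | cons i s hi _ ih =>
    rw [zeroOneVec_cons, mulVec_add]
    refine hf.eval_add h4 (hsingle i) ih fun h ↦ ?_
    have := congrFun (mulVec_injective_of_isUnit ((isUnit_iff_isUnit_det M).2 hM) h) i
    simp [zeroOneVec, hi] at this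

lemma projectivelyEquivalent_hommaKimQuartic (hf : IsFanoQuartic f)
    (h4 : Fintype.card F = 4) : ProjectivelyEquivalent F f (hommaKimQuartic F) := by
  obtain ⟨M, hM, h1⟩ := hf.exists_frame h4
  have hK : linearSubst M f = hommaKimQuartic F :=
    eq_hommaKimQuartic h4 (isHomogeneous_linearSubst M hf.isHomogeneous)
      (by rw [card_nonzeroPoints_linearSubst hM hf.isHomogeneous, hf.card_nonzeroPoints])
      fun s hs ↦ by rw [eval_linearSubst, hf.eval_mulVec_zeroOneVec h4 hM h1 hs]
  refine ⟨M⁻¹, isUnit_nonsing_inv_det M hM, 1, one_ne_zero, ?_⟩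
  change f = (1 : F) • linearSubst M⁻¹ (hommaKimQuartic F)
  rw [one_smul, ← hK, linearSubst_linearSubst, mul_nonsing_inv M hM, linearSubst_one]

end IsFanoQuartic

end HommaKimQuartic

/-! ### A weak Bézout theorem -/

section HomogeneousFactors

variable {σ R : Type*} [CommRing R]

/-- The homomorphism `X i ↦ X i * T` into polynomials in a new variable `T`; the coefficient of
`T ^ k` in the image of a polynomial is its homogeneous component of degree `k`. -/
def gradingHom : MvPolynomial σ R →ₐ[R] Polynomial (MvPolynomial σ R) :=
  aeval fun i ↦ Polynomial.C (X i) * Polynomial.X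

lemma gradingHom_monomial (s : σ →₀ ℕ) (r : R) :
    gradingHom (monomial s r) = Polynomial.C (monomial s r) * Polynomial.X ^ s.degree := by
  rw [gradingHom, aeval_monomial, monomial_eq, Polynomial.algebraMap_apply, algebraMap_eq]
  simp only [mul_pow, Finsupp.prod, Finset.prod_mul_distrib, map_mul, map_prod, map_pow,
    Finset.prod_pow_eq_pow_sum, Finsupp.degree_apply, mul_assoc]

lemma coeff_gradingHom (a : MvPolynomial σ R) (k : ℕ) :
    (gradingHom a).coeff k = homogeneousComponent k a := by
  induction a using MvPolynomial.induction_on' with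
  | monomial s r =>
    rw [gradingHom_monomial, Polynomial.coeff_C_mul_X_pow,
      homogeneousComponent_of_mem (isHomogeneous_monomial r rfl)]
  | add a b ha hb => rw [map_add, Polynomial.coeff_add, ha, hb, map_add]

lemma isHomogeneous_iff_gradingHom_eq {a : MvPolynomial σ R} {d : ℕ} :
    a.IsHomogeneous d ↔ gradingHom a = Polynomial.monomial d a := by
  constructor <;> intro h
  · ext1 k
    rw [coeff_gradingHom, Polynomial.coeff_monomial, homogeneousComponent_of_mem h]
    exact if_congr eq_comm rfl rfl
  · have hd := congrArg (Polynomial.coeff · d) h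
    simp only [coeff_gradingHom, Polynomial.coeff_monomial_same] at hd
    exact hd ▸ homogeneousComponent_isHomogeneous d a

lemma gradingHom_injective : Function.Injective (gradingHom (σ := σ) (R := R)) := by
  refine (injective_iff_map_eq_zero _).2 fun a ha ↦ ?_
  rw [← sum_homogeneousComponent a]
  exact Finset.sum_eq_zero fun k _ ↦ by rw [← coeff_gradingHom, ha, Polynomial.coeff_zero]

lemma isHomogeneous_of_natTrailingDegree_eq {a : MvPolynomial σ R}
    (h : (gradingHom a).natTrailingDegree = (gradingHom a).natDegree) :
    a.IsHomogeneous (gradingHom a).natDegree := by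
  set d := (gradingHom a).natDegree
  have hmonomial : gradingHom a = Polynomial.monomial d (homogeneousComponent d a) := by
    ext1 k
    rw [Polynomial.coeff_monomial]
    split_ifs with hk
    · rw [← hk, coeff_gradingHom]
    · rcases lt_or_gt_of_ne hk with hlt | hgt
      · exact Polynomial.coeff_eq_zero_of_natDegree_lt hlt
      · exact Polynomial.coeff_eq_zero_of_lt_natTrailingDegree (h ▸ hgt)
  have hcomponent := homogeneousComponent_isHomogeneous d a
  rw [← isHomogeneous_iff_gradingHom_eq.1 hcomponent] at hmonomial
  exact gradingHom_injective hmonomial ▸ hcomponent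

lemma exists_isHomogeneous_of_mul [IsDomain R] {a b : MvPolynomial σ R} {d : ℕ}
    (hab : (a * b).IsHomogeneous d) (h0 : a * b ≠ 0) :
    ∃ m n, a.IsHomogeneous m ∧ b.IsHomogeneous n ∧ m + n = d := by
  have hg := isHomogeneous_iff_gradingHom_eq.1 hab
  have ha := (map_ne_zero_iff _ gradingHom_injective).2 (left_ne_zero_of_mul h0)
  have hb := (map_ne_zero_iff _ gradingHom_injective).2 (right_ne_zero_of_mul h0)
  rw [map_mul] at hg
  have hdeg := congrArg Polynomial.natDegree hg
  have htrailing := congrArg Polynomial.natTrailingDegree hg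
  rw [Polynomial.natDegree_mul ha hb, Polynomial.natDegree_monomial_eq _ h0] at hdeg
  rw [Polynomial.natTrailingDegree_mul ha hb, Polynomial.natTrailingDegree_monomial h0] at htrailing
  have hle := Polynomial.natTrailingDegree_le_natDegree (gradingHom a)
  have hle' := Polynomial.natTrailingDegree_le_natDegree (gradingHom b)
  exact ⟨_, _, isHomogeneous_of_natTrailingDegree_eq (by omega),
    isHomogeneous_of_natTrailingDegree_eq (by omega), hdeg⟩

end HomogeneousFactors

section HomogeneousSubmodule

variable {σ R : Type*} [CommRing R]

instance [Finite σ] (m : ℕ) : Module.Finite R (homogeneousSubmodule σ R m) :=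
  Module.Finite.iff_fg.2 (homogeneousSubmodule_fg σ R m)

lemma finrank_homogeneousSubmodule [Fintype σ] [StrongRankCondition R] (m : ℕ) :
    Module.finrank R (homogeneousSubmodule σ R m) = (Fintype.card σ).multichoose m := by
  classical
  have hexponents : {s : σ →₀ ℕ | s.degree = m} =
      ((Finset.univ : Finset σ).finsuppAntidiag m : Set (σ →₀ ℕ)) := by
    ext s
    simp [Finsupp.degree_eq_sum]
  rw [homogeneousSubmodule_eq_finsupp_supported,
    (AddMonoidAlgebra.supportedEquivFinsupp {s : σ →₀ ℕ | s.degree = m}).finrank_eq, hexponents,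
    Module.finrank_finsupp_self]
  exact (Fintype.card_coe _).trans (Finset.card_finsuppAntidiag_nat_eq_multichoose _)

lemma two_mul_finrank_homogeneousSubmodule_fin_three [StrongRankCondition R] (m : ℕ) :
    2 * Module.finrank R (homogeneousSubmodule (Fin 3) R m) = (m + 2) * (m + 1) := by
  rw [finrank_homogeneousSubmodule, Fintype.card_fin, Nat.multichoose_eq,
    show 3 + m - 1 = m + 2 by omega, Nat.choose_symm_add, Nat.choose_two_right,
    Nat.mul_div_cancel' (Nat.even_mul_pred_self _).two_dvd]
  rfl

end HomogeneousSubmodule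

section Bezout

open scoped Matrix Polynomial

variable {F : Type*} [Field F]

lemma exists_X_pow_dvd_mul_sub {u : F[X]} (hu : u.coeff 0 ≠ 0) (w : F[X]) (k : ℕ) :
    ∃ w' : F[X], w'.degree < k ∧ Polynomial.X ^ k ∣ u * w' - w := by
  have hcoprime : IsCoprime (Polynomial.X ^ k) u :=
    ((Polynomial.irreducible_X.coprime_iff_not_dvd).2 (mt Polynomial.X_dvd_iff.1 hu)).pow_left
  obtain ⟨y, x, hxy⟩ := hcoprime
  have hdiv := Polynomial.modByMonic_add_div (w * x) (Polynomial.X ^ k)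
  refine ⟨(w * x) %ₘ Polynomial.X ^ k, ?_, -(w * y) - u * ((w * x) /ₘ Polynomial.X ^ k), ?_⟩
  · simpa using Polynomial.degree_modByMonic_lt (w * x) (Polynomial.monic_X_pow k)
  · linear_combination w * hxy + u * hdiv

lemma exists_dual_of_crossProduct_ne_zero {p v : Fin 3 → F} (hpv : p ⨯₃ v ≠ 0) :
    ∃ μ l : Fin 3 → F, μ ⬝ᵥ p = 1 ∧ μ ⬝ᵥ v = 0 ∧ l ⬝ᵥ p = 0 ∧ l ⬝ᵥ v = 1 := by
  obtain ⟨n, hn⟩ := exists_dotProduct_eq_one hpv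
  refine ⟨v ⨯₃ n, n ⨯₃ p, ?_, ?_, ?_, ?_⟩
  · rw [dotProduct_comm, triple_product_permutation, triple_product_permutation, hn]
  · rw [dotProduct_comm, dot_self_cross]
  · rw [dotProduct_comm, dot_cross_self]
  · rw [dotProduct_comm, triple_product_permutation, hn]

lemma exists_isHomogeneous_lineRestriction_eq {p v : Fin 3 → F} (hpv : p ⨯₃ v ≠ 0) {w : F[X]}
    {m : ℕ} (hw : w.natDegree ≤ m) :
    ∃ g : MvPolynomial (Fin 3) F, g.IsHomogeneous m ∧ lineRestriction p v g = w := by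
  obtain ⟨μ, l, hμp, hμv, hlp, hlv⟩ := exists_dual_of_crossProduct_ne_zero hpv
  refine ⟨∑ j ∈ Finset.range (m + 1), C (w.coeff j) * (linearForm l ^ j * linearForm μ ^ (m - j)),
    IsHomogeneous.sum _ _ _ fun j hj ↦ IsHomogeneous.C_mul ?_ _, ?_⟩
  · have hjm : 1 * j + 1 * (m - j) = m := by
      have := Finset.mem_range_succ_iff.1 hj
      omega
    have hmul := ((isHomogeneous_linearForm l).pow j).mul
      ((isHomogeneous_linearForm μ).pow (m - j))
    rwa [hjm] at hmul
  · conv_rhs => rw [w.as_sum_range_C_mul_X_pow' (Nat.lt_succ_of_le hw)]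
    simp only [map_sum, map_mul, map_pow, lineRestriction_linearForm, hμp, hμv, hlp, hlv]
    simp [lineRestriction]

section Jets

variable {ι : Type*} [Fintype ι] {p v : ι → Fin 3 → F}

lemma exists_isHomogeneous_separating (hpp : Pairwise fun i j ↦ p i ⨯₃ p j ≠ 0) (k : ℕ) (i : ι) :
    ∃ G : MvPolynomial (Fin 3) F, G.IsHomogeneous ((Fintype.card ι - 1) * k) ∧
      eval (p i) G = 1 ∧ ∀ j ≠ i, Polynomial.X ^ k ∣ lineRestriction (p j) (v j) G := by
  classical
  have hline (j : ι) : ∃ μ : Fin 3 → F, j ≠ i → μ ⬝ᵥ p i = 1 ∧ μ ⬝ᵥ p j = 0 := by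
    by_cases hji : j = i
    · exact ⟨0, fun h ↦ absurd hji h⟩
    · obtain ⟨μ, -, hi, hj, -⟩ := exists_dual_of_crossProduct_ne_zero (hpp (Ne.symm hji))
      exact ⟨μ, fun _ ↦ ⟨hi, hj⟩⟩
  choose μ hμ using hline
  refine ⟨∏ j ∈ Finset.univ.erase i, linearForm (μ j) ^ k, ?_, ?_, fun j hj ↦ ?_⟩
  · have hprod := IsHomogeneous.prod (Finset.univ.erase i) (fun j ↦ linearForm (μ j) ^ k) _
      fun j _ ↦ (isHomogeneous_linearForm (μ j)).pow k
    rwa [Finset.sum_const, Finset.card_erase_of_mem (Finset.mem_univ i), Finset.card_univ, one_mul,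
      smul_eq_mul] at hprod
  · rw [map_prod]
    refine Finset.prod_eq_one fun j hj ↦ ?_
    rw [map_pow, eval_linearForm, (hμ j (Finset.ne_of_mem_erase hj)).1, one_pow]
  · rw [map_prod]
    refine dvd_trans ?_ (Finset.dvd_prod_of_mem _ (Finset.mem_erase.2 ⟨hj, Finset.mem_univ _⟩))
    rw [map_pow, lineRestriction_linearForm, (hμ j hj).2, Polynomial.C_0, zero_add]
    exact pow_dvd_pow_of_dvd (dvd_mul_left _ _) k

lemma exists_isHomogeneous_jet_eq (hpv : ∀ i, p i ⨯₃ v i ≠ 0)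
    (hpp : Pairwise fun i j ↦ p i ⨯₃ p j ≠ 0) {k m : ℕ} (hm : Fintype.card ι * k ≤ m) (i : ι)
    (w : F[X]) :
    ∃ g : MvPolynomial (Fin 3) F, g.IsHomogeneous m ∧
      Polynomial.X ^ k ∣ lineRestriction (p i) (v i) g - w ∧
      ∀ j ≠ i, Polynomial.X ^ k ∣ lineRestriction (p j) (v j) g := by
  obtain ⟨G, hG, hGi, hGj⟩ := exists_isHomogeneous_separating (v := v) hpp k i
  obtain ⟨w', hdeg, hdvd⟩ := exists_X_pow_dvd_mul_sub
    (u := lineRestriction (p i) (v i) G) (by simp [coeff_zero_lineRestriction, hGi]) w k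
  have hk : (Fintype.card ι - 1) * k + k ≤ m := by
    rwa [← Nat.succ_mul, Nat.succ_eq_add_one, Nat.sub_add_cancel (Fintype.card_pos_iff.2 ⟨i⟩)]
  obtain ⟨g, hg, hgw⟩ := exists_isHomogeneous_lineRestriction_eq (hpv i) (w := w')
    (m := m - (Fintype.card ι - 1) * k)
    ((Polynomial.natDegree_le_of_degree_le hdeg.le).trans (by omega))
  refine ⟨G * g, ?_, by rwa [map_mul, hgw], fun j hj ↦ ?_⟩
  · exact (Nat.add_sub_of_le (le_of_add_le_left hk)) ▸ hG.mul hg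
  · rw [map_mul]
    exact (hGj j hj).mul_right _

/-- The `k`-jets of a polynomial at the points `p i` in the directions `v i`: the coefficients of
degree less than `k` of its restrictions to the corresponding lines. -/
def jetMap {ι : Type*} (p v : ι → Fin 3 → F) (k : ℕ) :
    MvPolynomial (Fin 3) F →ₗ[F] ι × Fin k → F :=
  LinearMap.pi fun ij ↦
    Polynomial.lcoeff F ij.2 ∘ₗ (lineRestriction (p ij.1) (v ij.1)).toLinearMap

lemma mem_ker_jetMap {ι : Type*} {p v : ι → Fin 3 → F} {k : ℕ} {g : MvPolynomial (Fin 3) F} :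
    g ∈ LinearMap.ker (jetMap p v k) ↔
      ∀ i, Polynomial.X ^ k ∣ lineRestriction (p i) (v i) g := by
  simp only [LinearMap.mem_ker, funext_iff, Prod.forall, Polynomial.X_pow_dvd_iff]
  exact ⟨fun h i j hj ↦ h i ⟨j, hj⟩, fun h i j ↦ h i j j.2⟩

lemma map_jetMap_homogeneousSubmodule (hpv : ∀ i, p i ⨯₃ v i ≠ 0)
    (hpp : Pairwise fun i j ↦ p i ⨯₃ p j ≠ 0) {k m : ℕ} (hm : Fintype.card ι * k ≤ m) :
    (homogeneousSubmodule (Fin 3) F m).map (jetMap p v k) = ⊤ := by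
  classical
  refine Submodule.eq_top_iff'.2 fun y ↦ ?_
  choose g hg hgi hgj using fun i ↦ exists_isHomogeneous_jet_eq hpv hpp hm i
    (∑ j : Fin k, Polynomial.C (y (i, j)) * Polynomial.X ^ (j : ℕ))
  refine ⟨∑ i, g i, IsHomogeneous.sum _ _ _ fun i _ ↦ hg i, funext fun ⟨i, j⟩ ↦ ?_⟩
  change (lineRestriction (p i) (v i) (∑ i, g i)).coeff j = y (i, j)
  rw [map_sum, Polynomial.finsetSum_coeff, Finset.sum_eq_single_of_mem i (Finset.mem_univ i)
    fun b _ hb ↦ Polynomial.X_pow_dvd_iff.1 (hgj b i hb.symm) j j.2]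
  have hcoeff := Polynomial.X_pow_dvd_iff.1 (hgi i) j j.2
  rw [Polynomial.coeff_sub, sub_eq_zero] at hcoeff
  simp [hcoeff, Polynomial.coeff_C_mul, Polynomial.coeff_X_pow, Fin.val_inj]

lemma finrank_homogeneousSubmodule_inf_ker_jetMap (hpv : ∀ i, p i ⨯₃ v i ≠ 0)
    (hpp : Pairwise fun i j ↦ p i ⨯₃ p j ≠ 0) {k m : ℕ} (hm : Fintype.card ι * k ≤ m) :
    Fintype.card ι * k +
        Module.finrank F ↥(homogeneousSubmodule (Fin 3) F m ⊓ LinearMap.ker (jetMap p v k)) =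
      Module.finrank F (homogeneousSubmodule (Fin 3) F m) := by
  have h := LinearMap.finrank_range_add_finrank_ker
    ((jetMap p v k).domRestrict (homogeneousSubmodule (Fin 3) F m))
  rwa [LinearMap.range_domRestrict, map_jetMap_homogeneousSubmodule hpv hpp hm, finrank_top,
    Module.finrank_fintype_fun_eq_card, Fintype.card_prod, Fintype.card_fin,
    ← Submodule.finrank_map_subtype_eq, LinearMap.domRestrict, LinearMap.ker_comp,
    Submodule.map_comap_subtype] at h

end Jets

lemma map_mulLeft_inf_map_mulLeft_le {σ : Type*} {f h : MvPolynomial σ F} {d e t : ℕ}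
    (hf : f.IsHomogeneous d) (hprime : Prime f) (hfh : ¬ f ∣ h) :
    (homogeneousSubmodule σ F (e + t)).map (LinearMap.mulLeft F f) ⊓
        (homogeneousSubmodule σ F (d + t)).map (LinearMap.mulLeft F h) ≤
      (homogeneousSubmodule σ F t).map (LinearMap.mulLeft F (h * f)) := by
  rintro _ ⟨⟨a, -, rfl⟩, b, hb, hab : h * b = f * a⟩
  obtain ⟨c, rfl⟩ := (hprime.dvd_or_dvd (hab ▸ dvd_mul_right f a)).resolve_left hfh
  refine ⟨c, ?_, (mul_assoc h f c).trans hab⟩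
  by_cases h0 : f * c = 0
  · rw [(mul_eq_zero.1 h0).resolve_left hprime.ne_zero]
    exact Submodule.zero_mem _
  · obtain ⟨m, n, hm, hn, hmn⟩ := exists_isHomogeneous_of_mul hb h0
    obtain rfl : m = d := hm.inj_right hf hprime.ne_zero
    exact Nat.add_left_cancel hmn ▸ hn

/-- A weak form of Bézout's theorem, which counts only contact along prescribed tangent lines at
rational points. -/
theorem card_mul_le_mul_of_prime {ι : Type*} [Fintype ι] {p v : ι → Fin 3 → F}
    (hpv : ∀ i, p i ⨯₃ v i ≠ 0) (hpp : Pairwise fun i j ↦ p i ⨯₃ p j ≠ 0) {k d e : ℕ}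
    {f h : MvPolynomial (Fin 3) F} (hf : f.IsHomogeneous d) (hh : h.IsHomogeneous e)
    (hprime : Prime f) (hfh : ¬ f ∣ h)
    (hfX : ∀ i, Polynomial.X ^ k ∣ lineRestriction (p i) (v i) f)
    (hhX : ∀ i, Polynomial.X ^ k ∣ lineRestriction (p i) (v i) h) :
    Fintype.card ι * k ≤ d * e := by
  let V (n : ℕ) := homogeneousSubmodule (Fin 3) F n
  obtain ⟨t, ht⟩ : ∃ t, t = Fintype.card ι * k := ⟨_, rfl⟩
  let A := (V (e + t)).map (LinearMap.mulLeft F f)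
  let B := (V (d + t)).map (LinearMap.mulLeft F h)
  have hh0 : h ≠ 0 := fun h0 ↦ hfh (h0 ▸ dvd_zero f)
  have hA : Module.finrank F A = Module.finrank F (V (e + t)) :=
    ((V (e + t)).equivMapOfInjective _ (mul_right_injective₀ hprime.ne_zero)).finrank_eq.symm
  have hB : Module.finrank F B = Module.finrank F (V (d + t)) :=
    ((V (d + t)).equivMapOfInjective _ (mul_right_injective₀ hh0)).finrank_eq.symm
  have hinf : Module.finrank F ↥(A ⊓ B) ≤ Module.finrank F (V t) :=
    (Submodule.finrank_mono (map_mulLeft_inf_map_mulLeft_le hf hprime hfh)).trans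
      (Submodule.finrank_map_le _ _)
  have hsup : A ⊔ B ≤ V (d + (e + t)) ⊓ LinearMap.ker (jetMap p v k) := by
    refine sup_le ?_ ?_
    · rintro _ ⟨a, ha, rfl⟩
      exact ⟨hf.mul ha, mem_ker_jetMap.2 fun i ↦ by simpa using (hfX i).mul_right _⟩
    · rintro _ ⟨b, hb, rfl⟩
      exact ⟨Nat.add_left_comm e d t ▸ hh.mul hb,
        mem_ker_jetMap.2 fun i ↦ by simpa using (hhX i).mul_right _⟩
  have hker := finrank_homogeneousSubmodule_inf_ker_jetMap hpv hpp
    (show Fintype.card ι * k ≤ d + (e + t) by omega)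
  have hle := Submodule.finrank_mono hsup
  have hadd := Submodule.finrank_sup_add_finrank_inf_eq A B
  have hdim := two_mul_finrank_homogeneousSubmodule_fin_three (R := F)
  have := hdim t
  have := hdim (e + t)
  have := hdim (d + t)
  have := hdim (d + (e + t))
  nlinarith

end Bezout

/-! ### Curves of degree less than `q` -/

section FrobeniusPencil

open scoped Matrix Polynomial

variable {σ F A : Type*} [Field F] [Fintype F] [CommRing A] [Algebra F A]

/-- The polynomial `f (x + T x^(q))` in `T`, where `x^(q)` is the Frobenius image of the generic
point `x`. Its coefficients take the place of the tangency form `x^(q) ⬝ grad f x` of Stöhr and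
Voloch, which is its coefficient of `T`. -/
def frobeniusPencil (f : MvPolynomial σ F) : (MvPolynomial σ F)[X] :=
  aeval (fun i ↦ Polynomial.C (X i) + Polynomial.C (X i ^ Fintype.card F) * Polynomial.X) f

lemma aeval_coeff_frobeniusPencil (f : MvPolynomial σ F) (x : σ → A) (j : ℕ) :
    aeval x ((frobeniusPencil f).coeff j) =
      Polynomial.coeff
        (aeval (fun i ↦ Polynomial.C (x i) + Polynomial.C (x i ^ Fintype.card F) * Polynomial.X) f)
        j := by
  have hmap : aeval
      (fun i ↦ Polynomial.C (x i) + Polynomial.C (x i ^ Fintype.card F) * Polynomial.X) f =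
      Polynomial.mapAlgHom (aeval x : MvPolynomial σ F →ₐ[F] A) (frobeniusPencil f) := by
    rw [frobeniusPencil, comp_aeval_apply]
    simp
  rw [hmap, Polynomial.coe_mapAlgHom, Polynomial.coeff_map]
  rfl

lemma coeff_zero_frobeniusPencil (f : MvPolynomial σ F) : (frobeniusPencil f).coeff 0 = f := by
  have hzero := comp_aeval_apply (R := F) (f := fun i ↦ Polynomial.C (X i : MvPolynomial σ F) +
    Polynomial.C (X i ^ Fintype.card F) * Polynomial.X)
    ((Polynomial.aeval (0 : MvPolynomial σ F)).restrictScalars F) f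
  rw [Polynomial.coeff_zero_eq_aeval_zero]
  refine Eq.trans hzero ?_
  simp

lemma isHomogeneous_coeff_frobeniusPencil {f : MvPolynomial σ F} {d : ℕ} (hf : f.IsHomogeneous d)
    (j : ℕ) : ((frobeniusPencil f).coeff j).IsHomogeneous (d + j * (Fintype.card F - 1)) := by
  set r := Fintype.card F - 1
  let T : (MvPolynomial σ F)[X] := Polynomial.X
  have hT : T ^ Fintype.card F = T * T ^ r := (mul_pow_sub_one Fintype.card_ne_zero T).symm
  let Φ : (MvPolynomial σ F)[X] →ₐ[F] (MvPolynomial σ F)[X][X] :=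
    ((Polynomial.aeval (Polynomial.C (T ^ r) * Polynomial.X)).restrictScalars F).comp
      (Polynomial.mapAlgHom Polynomial.CAlgHom)
  have hΦ : Φ (frobeniusPencil f) =
      ((frobeniusPencil f).map Polynomial.C).comp (Polynomial.C (T ^ r) * Polynomial.X) := rfl
  have hsubst : (fun i ↦ Polynomial.C (Polynomial.C (X i) * T) +
      Polynomial.C ((Polynomial.C (X i : MvPolynomial σ F) * T) ^ Fintype.card F) * Polynomial.X) =
      Polynomial.C T • fun i ↦
        Φ (Polynomial.C (X i) + Polynomial.C (X i ^ Fintype.card F) * Polynomial.X) := by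
    funext i
    simp only [Φ, mul_pow, hT]
    simp
    ring
  rw [isHomogeneous_iff_gradingHom_eq, gradingHom, aeval_coeff_frobeniusPencil, hsubst,
    aeval_smul_of_isHomogeneous hf, ← comp_aeval_apply, ← frobeniusPencil, hΦ, ← map_pow,
    Polynomial.coeff_C_mul, Polynomial.comp_C_mul_X_coeff, Polynomial.coeff_map,
    ← Polynomial.C_mul_X_pow_eq_monomial]
  ring

lemma X_pow_dvd_lineRestriction_coeff_frobeniusPencil {f : MvPolynomial σ F} {d m : ℕ}
    (hf : f.IsHomogeneous d) {p v : σ → F} (hm : Polynomial.X ^ m ∣ lineRestriction p v f)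
    (j : ℕ) : Polynomial.X ^ m ∣ lineRestriction p v ((frobeniusPencil f).coeff j) := by
  have hfrob (i : σ) : (Polynomial.C (p i) + Polynomial.C (v i) * Polynomial.X) ^ Fintype.card F =
      Polynomial.C (p i) + Polynomial.C (v i) * Polynomial.X ^ Fintype.card F := by
    rw [← FiniteField.expand_card]
    simp
  have hsubst (i : σ) : Polynomial.C (Polynomial.C (p i) + Polynomial.C (v i) * Polynomial.X) +
      Polynomial.C ((Polynomial.C (p i) + Polynomial.C (v i) * Polynomial.X) ^ Fintype.card F) *
        Polynomial.X =
      algebraMap F F[X][X] (p i) * (1 + Polynomial.X) + algebraMap F F[X][X] (v i) *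
        (Polynomial.C Polynomial.X +
          Polynomial.C (Polynomial.X ^ Fintype.card F) * Polynomial.X) := by
    rw [hfrob]
    simp only [Polynomial.algebraMap_apply, Polynomial.algebraMap_eq, map_add, map_mul]
    ring
  rw [lineRestriction, aeval_coeff_frobeniusPencil]
  simp only [hsubst, aeval_mul_add_mul_of_isHomogeneous hf]
  refine (Polynomial.C_dvd_iff_dvd_coeff _ _).1 (Finset.dvd_sum fun k _ ↦ ?_) j
  rcases lt_or_ge k m with hk | hk
  · rw [Polynomial.X_pow_dvd_iff.1 hm k hk, map_zero, zero_mul]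
    exact dvd_zero _
  · rw [map_pow]
    refine (((pow_dvd_pow _ hk).trans (pow_dvd_pow_of_dvd ?_ k)).mul_left _).mul_left _
    exact dvd_add dvd_rfl ((map_dvd _ (dvd_pow_self _ Fintype.card_ne_zero)).mul_right _)

end FrobeniusPencil

section TangentContact

open scoped Matrix Polynomial

section Expansion

variable {σ R B : Type*} [CommRing R] [CommRing B] [Algebra R B] {f : MvPolynomial σ R}
  {d m : ℕ} {τ : B}

lemma pow_mul_aeval_of_pow_succ_eq_zero (hf : f.IsHomogeneous d) (p v : σ → R) (s : B)
    (hτ : τ ^ (m + 1) = 0) :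
    τ ^ m * aeval (fun i ↦ algebraMap R B (p i) * s + algebraMap R B (v i) * τ) f =
      τ ^ m * (algebraMap R B (eval p f) * s ^ d) := by
  rw [aeval_mul_add_mul_of_isHomogeneous hf, Finset.sum_range_succ', mul_add, Finset.mul_sum,
    Finset.sum_eq_zero fun k _ ↦ ?_, coeff_zero_lineRestriction, zero_add, pow_zero, mul_one,
    Nat.sub_zero]
  have hvanish : τ ^ m * τ ^ (k + 1) = 0 := by
    rw [← pow_add]
    exact pow_eq_zero_of_le (by omega) hτ
  linear_combination (algebraMap R B ((lineRestriction p v f).coeff (k + 1)) *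
    s ^ (d - (k + 1))) * hvanish

lemma aeval_of_X_pow_dvd_lineRestriction (hf : f.IsHomogeneous d) {p v : σ → R} (s : B)
    (hτ : τ ^ (m + 1) = 0) (hmd : m ≤ d) (hdvd : Polynomial.X ^ m ∣ lineRestriction p v f) :
    aeval (fun i ↦ algebraMap R B (p i) * s + algebraMap R B (v i) * τ) f =
      τ ^ m * (algebraMap R B ((lineRestriction p v f).coeff m) * s ^ (d - m)) := by
  rw [aeval_mul_add_mul_of_isHomogeneous hf,
    Finset.sum_eq_single_of_mem m (Finset.mem_range_succ_iff.2 hmd)]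
  · ring
  · intro k _ hk
    rcases lt_or_gt_of_ne hk with hlt | hgt
    · rw [Polynomial.X_pow_dvd_iff.1 hdvd k hlt, map_zero, zero_mul]
    · rw [pow_eq_zero_of_le hgt hτ, mul_zero, mul_zero]

lemma aeval_add_pow_mul_of_X_pow_dvd_lineRestriction [Fintype σ] (hf : f.IsHomogeneous d)
    {p v : σ → R} (y : σ → R) (s : B) (hτ : τ ^ (m + 1) = 0) (hm : 1 ≤ m) (hmd : m ≤ d)
    (hdvd : Polynomial.X ^ m ∣ lineRestriction p v f) :
    aeval (fun i ↦ algebraMap R B (p i) * s + algebraMap R B (v i) * τ +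
        τ ^ m * algebraMap R B (y i)) f =
      τ ^ m * (algebraMap R B ((lineRestriction p v f).coeff m) * s ^ (d - m) +
        algebraMap R B (y ⬝ᵥ grad f p) * s ^ (d - 1)) := by
  have htaylor := sq_dvd_aeval_add_mul_sub f
    (fun i ↦ algebraMap R B (p i) * s + algebraMap R B (v i) * τ) (fun i ↦ algebraMap R B (y i))
    (τ ^ m)
  rw [← pow_mul, pow_eq_zero_of_le (by omega) hτ, zero_dvd_iff, sub_eq_zero] at htaylor
  rw [htaylor, aeval_of_X_pow_dvd_lineRestriction hf s hτ hmd hdvd, mul_add, Finset.mul_sum,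
    dotProduct, map_sum, Finset.sum_mul, Finset.mul_sum]
  congr 1
  refine Finset.sum_congr rfl fun i _ ↦ ?_
  rw [mul_left_comm, pow_mul_aeval_of_pow_succ_eq_zero hf.pderiv p v s hτ, map_mul, grad]
  ring

end Expansion

lemma le_of_X_pow_dvd_one_add_X_pow_sub {R : Type*} [CommRing R] [Nontrivial R] {a b Q : ℕ}
    (hb : 0 < b)
    (hdvd : (Polynomial.X ^ Q : R[X]) ∣ (1 + Polynomial.X) ^ a - (1 + Polynomial.X) ^ (a + b)) :
    Q ≤ b := by
  by_contra! hlt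
  have hcoprime : IsCoprime (Polynomial.X ^ Q : R[X]) ((1 + Polynomial.X) ^ a) :=
    IsCoprime.pow ⟨-1, 1, by ring⟩
  rw [pow_add, ← mul_one_sub] at hdvd
  have hcoeff := Polynomial.X_pow_dvd_iff.1 (hcoprime.dvd_of_dvd_mul_left hdvd) b hlt
  simp [Polynomial.coeff_one_add_X_pow, Polynomial.coeff_one, hb.ne'] at hcoeff

universe u in
lemma exists_algebra_pow_succ_eq_zero (F : Type u) [Field F] (m : ℕ) :
    ∃ (A : Type u) (_ : CommRing A) (_ : Algebra F A) (ε : A),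
      ε ^ (m + 1) = 0 ∧ ∀ a : F, ε ^ m * algebraMap F A a = 0 → a = 0 := by
  refine ⟨AdjoinRoot (Polynomial.X ^ (m + 1) : F[X]), inferInstance, inferInstance,
    AdjoinRoot.root _, ?_, fun a ha ↦ ?_⟩
  · rw [AdjoinRoot.root, ← map_pow, AdjoinRoot.mk_self]
  · rw [AdjoinRoot.algebraMap_eq, AdjoinRoot.of, RingHom.comp_apply, AdjoinRoot.root, ← map_pow,
      ← map_mul, AdjoinRoot.mk_eq_zero, Polynomial.X_pow_dvd_iff] at ha
    simpa using ha m m.lt_succ_self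

variable {σ F : Type*} [Fintype σ] [Field F] [Fintype F] {f : MvPolynomial σ F} {d : ℕ}

/-- The values of the Frobenius pencil along an arc with tangent direction `v`. The Frobenius map
contracts the arc to its starting point `p` because its order `q` exceeds the truncation order. -/
lemma aeval_coeff_frobeniusPencil_arc {A : Type*} [CommRing A] [Algebra F A]
    (hf : f.IsHomogeneous d) {p v : σ → F} (y : σ → F) {m : ℕ} {ε : A} (hε : ε ^ (m + 1) = 0)
    (hm : 1 ≤ m) (hmd : m ≤ d) (hmq : m < Fintype.card F)
    (hdvd : Polynomial.X ^ m ∣ lineRestriction p v f) (j : ℕ) :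
    aeval (fun i ↦ algebraMap F A (p i) + algebraMap F A (v i) * ε + ε ^ m * algebraMap F A (y i))
        ((frobeniusPencil f).coeff j) =
      ε ^ m * algebraMap F A
        (Polynomial.coeff (Polynomial.C ((lineRestriction p v f).coeff m) *
          (1 + Polynomial.X) ^ (d - m) +
          Polynomial.C (y ⬝ᵥ grad f p) * (1 + Polynomial.X) ^ (d - 1)) j) := by
  have hfrob (i : σ) : (algebraMap F A (p i) + algebraMap F A (v i) * ε +
      ε ^ m * algebraMap F A (y i)) ^ Fintype.card F = algebraMap F A (p i) := by
    have hεq : ε ^ Fintype.card F = 0 := pow_eq_zero_of_le hmq hε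
    change FiniteField.frobeniusAlgHom F A _ = _
    simp only [map_add, map_mul, map_pow, AlgHom.commutes, FiniteField.frobeniusAlgHom_apply, hεq,
      zero_pow (Nat.one_le_iff_ne_zero.1 hm), zero_mul, mul_zero, add_zero]
  have hsubst (i : σ) : Polynomial.C (algebraMap F A (p i) + algebraMap F A (v i) * ε +
      ε ^ m * algebraMap F A (y i)) + Polynomial.C (algebraMap F A (p i)) * Polynomial.X =
      algebraMap F A[X] (p i) * (1 + Polynomial.X) + algebraMap F A[X] (v i) * Polynomial.C ε +
        Polynomial.C ε ^ m * algebraMap F A[X] (y i) := by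
    simp only [Polynomial.algebraMap_apply, map_add, map_mul, map_pow]
    ring
  have hεC : (Polynomial.C ε) ^ (m + 1) = 0 := by rw [← map_pow, hε, map_zero]
  rw [aeval_coeff_frobeniusPencil]
  simp only [hfrob, hsubst]
  rw [aeval_add_pow_mul_of_X_pow_dvd_lineRestriction hf y _ hεC hm hmd hdvd, ← map_pow,
    Polynomial.coeff_C_mul, ← Polynomial.coeff_map]
  simp [Polynomial.algebraMap_apply, Polynomial.coeff_one_add_X_pow]

theorem X_pow_succ_dvd_lineRestriction_of_dvd_frobeniusPencil (hf : f.IsHomogeneous d)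
    (hdq : d < Fintype.card F) {p v : σ → F} (hp : eval p f = 0) (hv : v ⬝ᵥ grad f p = 0)
    (hgrad : grad f p ≠ 0) (hne : lineRestriction p v f ≠ 0) {Q : ℕ}
    (hQ : ∀ j, 1 ≤ j → j < Q → f ∣ (frobeniusPencil f).coeff j) :
    Polynomial.X ^ (Q + 1) ∣ lineRestriction p v f := by
  set g := lineRestriction p v f with hg
  set m := g.natTrailingDegree
  set c := g.coeff m
  have hc : c ≠ 0 := Polynomial.coeff_natTrailingDegree_ne_zero.2 hne
  have hdvd : Polynomial.X ^ m ∣ g :=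
    Polynomial.X_pow_dvd_iff.2 fun k hk ↦ Polynomial.coeff_eq_zero_of_lt_natTrailingDegree hk
  have hmd : m ≤ d :=
    (Polynomial.natTrailingDegree_le_natDegree g).trans (natDegree_lineRestriction_le hf p v)
  have hm2 : 2 ≤ m := by
    refine (Polynomial.le_natTrailingDegree hne) fun k hk ↦ ?_
    interval_cases k
    · rw [hg, coeff_zero_lineRestriction, hp]
    · rw [hg, coeff_one_lineRestriction, hv]
  obtain ⟨n, hn⟩ := exists_dotProduct_eq_one hgrad
  obtain ⟨A, _, _, ε, hε, hinj⟩ := exists_algebra_pow_succ_eq_zero F m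
  -- The arc through `p` along `v`, corrected so that `f` vanishes on it modulo `ε ^ (m + 1)`.
  let γ (i : σ) : A := algebraMap F A (p i) + algebraMap F A (v i) * ε +
    ε ^ m * algebraMap F A ((-c • n) i)
  let E : F[X] := (1 + Polynomial.X) ^ (d - m) - (1 + Polynomial.X) ^ (d - m + (m - 1))
  have hE (j : ℕ) : aeval γ ((frobeniusPencil f).coeff j) =
      ε ^ m * algebraMap F A (c * E.coeff j) := by
    rw [aeval_coeff_frobeniusPencil_arc hf _ hε (by omega) hmd (by omega) hdvd, smul_dotProduct,
      hn, ← Polynomial.coeff_C_mul, show d - 1 = d - m + (m - 1) by omega]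
    simp [E, c, g, mul_add, sub_eq_add_neg]
  have hE0 : E.coeff 0 = 0 := by simp [E, Polynomial.coeff_zero_eq_eval_zero]
  have hfγ : aeval γ f = 0 := by
    simpa [coeff_zero_frobeniusPencil, hE0] using hE 0
  have hEdvd : Polynomial.X ^ Q ∣ E := by
    refine Polynomial.X_pow_dvd_iff.2 fun j hj ↦ ?_
    rcases j.eq_zero_or_pos with rfl | hj0
    · exact hE0
    · obtain ⟨r, hr⟩ := hQ j hj0 hj
      have hEj := hE j
      rw [hr, map_mul, hfγ, zero_mul] at hEj
      exact (mul_eq_zero.1 (hinj _ hEj.symm)).resolve_left hc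
  have hQm := le_of_X_pow_dvd_one_add_X_pow_sub (by omega) hEdvd
  exact (pow_dvd_pow _ (by omega)).trans hdvd

end TangentContact

section LowDegree

open Projectivization Finset
open scoped Matrix

lemma NoLinearFactor.of_dvd {σ R : Type*} [CommSemiring R] {f g : MvPolynomial σ R}
    (hno : NoLinearFactor f) (hgf : g ∣ f) : NoLinearFactor g :=
  fun ⟨l, hl0, hl, hlg⟩ ↦ hno ⟨l, hl0, hl, hlg.trans hgf⟩

lemma NoLinearFactor.ne_zero {σ R : Type*} [Nonempty σ] [CommSemiring R] [Nontrivial R]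
    {f : MvPolynomial σ R} (hno : NoLinearFactor f) : f ≠ 0 := by
  rintro rfl
  obtain ⟨i⟩ := ‹Nonempty σ›
  exact hno ⟨X i, X_ne_zero i, isHomogeneous_X R i, dvd_zero _⟩

lemma isUnit_iff_of_isHomogeneous {σ F : Type*} [Field F] {f : MvPolynomial σ F} {d : ℕ}
    (hf : f.IsHomogeneous d) (hf0 : f ≠ 0) : IsUnit f ↔ d = 0 := by
  rw [← hf.totalDegree hf0, isUnit_iff_totalDegree_of_isReduced, and_iff_right_iff_imp]
  intro hdeg
  rw [totalDegree_eq_zero_iff_eq_C] at hdeg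
  exact isUnit_iff_ne_zero.2 fun hcoeff ↦ hf0 (by rw [hdeg, hcoeff, C_0])

lemma exists_crossProduct_ne_zero_dotProduct_eq_zero {F : Type*} [Field F] [Finite F]
    (P : ProjPlane F) {w : Fin 3 → F} (hw : w ≠ 0) : ∃ v, P.rep ⨯₃ v ≠ 0 ∧ v ⬝ᵥ w = 0 := by
  classical
  obtain ⟨U, hU, hne⟩ := exists_mem_line_ne P (mk F w hw)
  exact ⟨U.rep, crossProduct_rep_ne_zero hne.symm, (mem_mk_iff U hw).1 hU⟩

variable {F : Type*} [Field F] [Fintype F] {f : MvPolynomial (Fin 3) F} {d : ℕ}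

lemma exists_not_dvd_coeff_frobeniusPencil (hno : NoLinearFactor f) (hf : f.IsHomogeneous d)
    (hdq : d < Fintype.card F) {P : ProjPlane F} (hP : eval P.rep f = 0)
    (hgrad : grad f P.rep ≠ 0) : ∃ Q, 1 ≤ Q ∧ Q < d ∧ ¬ f ∣ (frobeniusPencil f).coeff Q := by
  by_contra! hdvd
  obtain ⟨v, hPv, hv⟩ := exists_crossProduct_ne_zero_dotProduct_eq_zero P hgrad
  have hne := hno.lineRestriction_ne_zero hf hPv
  have hcontact :=
    X_pow_succ_dvd_lineRestriction_of_dvd_frobeniusPencil hf hdq hP hv hgrad hne hdvd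
  have hle := (Polynomial.natDegree_le_of_dvd hcontact hne).trans
    (natDegree_lineRestriction_le hf P.rep v)
  rw [Polynomial.natDegree_X_pow] at hle
  omega

lemma le_of_mul_add_one_le {N Q d q : ℕ} (hQd : Q < d) (hdq : d < q)
    (h : N * (Q + 1) ≤ d * (d + Q * (q - 1))) : N ≤ (d - 1) * q + 1 := by
  obtain ⟨s, rfl⟩ := Nat.exists_eq_add_of_lt hQd
  obtain ⟨t, rfl⟩ := Nat.exists_eq_add_of_lt hdq
  simp only [Nat.add_sub_cancel] at h ⊢
  refine Nat.le_of_mul_le_mul_right (h.trans ?_) Q.succ_pos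
  calc (Q + s + 1) * (Q + s + 1 + Q * (Q + s + 1 + t))
      ≤ (Q + s + 1) * (Q + s + 1 + Q * (Q + s + 1 + t)) + s * t := Nat.le_add_right _ _
    _ = ((Q + s) * (Q + s + 1 + t + 1) + 1) * (Q + 1) := by ring

lemma card_zeroPoints_le_of_grad_ne_zero (hno : NoLinearFactor f) (hf : f.IsHomogeneous d)
    (hdq : d < Fintype.card F) (hprime : Prime f)
    (hgrad : ∀ P ∈ zeroPoints f, grad f P.rep ≠ 0) :
    #(zeroPoints f) ≤ (d - 1) * Fintype.card F + 1 := by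
  classical
  obtain hempty | ⟨P₀, hP₀⟩ := (zeroPoints f).eq_empty_or_nonempty
  · simp [hempty]
  have hzero (P : zeroPoints f) : eval P.1.rep f = 0 := mem_zeroPoints.1 P.2
  choose v hv hvgrad using fun P : zeroPoints f ↦
    exists_crossProduct_ne_zero_dotProduct_eq_zero P.1 (hgrad P P.2)
  have hex := exists_not_dvd_coeff_frobeniusPencil hno hf hdq (mem_zeroPoints.1 hP₀) (hgrad P₀ hP₀)
  obtain ⟨-, hQd, hQ⟩ := Nat.find_spec hex
  have hmin (j : ℕ) (hj : 1 ≤ j) (hjQ : j < Nat.find hex) : f ∣ (frobeniusPencil f).coeff j :=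
    not_not.1 fun hndvd ↦ Nat.find_min hex hjQ ⟨hj, hjQ.trans hQd, hndvd⟩
  have hcontact (P : zeroPoints f) :
      Polynomial.X ^ (Nat.find hex + 1) ∣ lineRestriction P.1.rep (v P) f :=
    X_pow_succ_dvd_lineRestriction_of_dvd_frobeniusPencil hf hdq (hzero P) (hvgrad P)
      (hgrad P P.2) (hno.lineRestriction_ne_zero hf (hv P)) hmin
  have hbezout := card_mul_le_mul_of_prime hv
    (fun P P' h ↦ crossProduct_rep_ne_zero (Subtype.coe_ne_coe.2 h)) hf
    (isHomogeneous_coeff_frobeniusPencil hf _) hprime hQ hcontact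
    fun P ↦ X_pow_dvd_lineRestriction_coeff_frobeniusPencil hf (hcontact P) _
  rw [Fintype.card_coe] at hbezout
  exact le_of_mul_add_one_le hQd hdq hbezout

lemma card_zeroPoints_le_of_prime (hno : NoLinearFactor f) (hf : f.IsHomogeneous d)
    (hdq : d < Fintype.card F) (hprime : Prime f) :
    #(zeroPoints f) ≤ (d - 1) * Fintype.card F + 1 := by
  by_cases hsing : ∃ P ∈ zeroPoints f, grad f P.rep = 0
  · obtain ⟨P, hP, hgrad⟩ := hsing
    refine (card_zeroPoints_le_of_grad_eq_zero hno hf hP hgrad).trans ?_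
    obtain hd | ⟨k, rfl⟩ := (Nat.lt_or_ge d 2).imp_right Nat.exists_eq_add_of_le'
    · simp [Nat.sub_eq_zero_of_le hd.le]
    · simp only [Nat.add_sub_cancel, show k + 2 - 1 = k + 1 by omega]
      nlinarith
  · push Not at hsing
    exact card_zeroPoints_le_of_grad_ne_zero hno hf hdq hprime hsing

lemma card_zeroPoints_mul_le (f g : MvPolynomial (Fin 3) F) :
    #(zeroPoints (f * g)) ≤ #(zeroPoints f) + #(zeroPoints g) := by
  classical
  refine (card_le_card fun P hP ↦ ?_).trans (card_union_le _ _)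
  simpa using hP

theorem card_zeroPoints_le_of_degree_lt_card (hno : NoLinearFactor f) (hf : f.IsHomogeneous d)
    (hd : 0 < d) (hdq : d < Fintype.card F) :
    #(zeroPoints f) ≤ (d - 1) * Fintype.card F + 1 := by
  induction d using Nat.strong_induction_on generalizing f with
  | _ d ih =>
  have hf0 := hno.ne_zero
  by_cases hirr : Irreducible f
  · exact card_zeroPoints_le_of_prime hno hf hdq hirr.prime
  rw [irreducible_iff, not_and] at hirr
  push Not at hirr
  obtain ⟨a, b, rfl, ha, hb⟩ := hirr ((isUnit_iff_of_isHomogeneous hf hf0).not.2 hd.ne')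
  obtain ⟨m, n, hma, hnb, rfl⟩ := exists_isHomogeneous_of_mul hf hf0
  have hm : 0 < m := Nat.pos_of_ne_zero <|
    (isUnit_iff_of_isHomogeneous hma (left_ne_zero_of_mul hf0)).not.1 ha
  have hn : 0 < n := Nat.pos_of_ne_zero <|
    (isUnit_iff_of_isHomogeneous hnb (right_ne_zero_of_mul hf0)).not.1 hb
  have hcard_a := ih m (by omega) (hno.of_dvd (dvd_mul_right _ _)) hma hm (by omega)
  have hcard_b := ih n (by omega) (hno.of_dvd (dvd_mul_left _ _)) hnb hn (by omega)
  have hunion := card_zeroPoints_mul_le a b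
  obtain ⟨m, rfl⟩ := Nat.exists_eq_add_of_le' hm
  obtain ⟨n, rfl⟩ := Nat.exists_eq_add_of_le' hn
  simp only [Nat.add_sub_cancel, show m + 1 + (n + 1) - 1 = m + n + 1 by omega] at *
  nlinarith

end LowDegree

section Bound

open Finset

lemma ncard_setOf_eval_rep_eq_zero {F : Type*} [Field F] [Fintype F]
    (f : MvPolynomial (Fin 3) F) :
    {X : Projectivization F (Fin 3 → F) | eval X.rep f = 0}.ncard = #(zeroPoints f) := by
  rw [← Set.ncard_coe_finset]
  congr 1
  ext X
  simp

lemma card_zeroPoints_le_of_card_add_one_lt {F : Type*} [Field F] [Fintype F]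
    (f : MvPolynomial (Fin 3) F) {d : ℕ} (hd : Fintype.card F + 1 < d) :
    #(zeroPoints f) ≤ (d - 1) * Fintype.card F + 1 := by
  have hmul : (Fintype.card F + 1) * Fintype.card F ≤ (d - 1) * Fintype.card F :=
    Nat.mul_le_mul_right _ (by omega)
  have hle := (zeroPoints f).card_le_univ
  rw [card_projPlane] at hle
  nlinarith

variable {F : Type} [Field F] [Fintype F] {f : MvPolynomial (Fin 3) F} {d : ℕ}

theorem projectivelyEquivalent_hommaKimQuartic_of_lt_card_zeroPoints (hno : NoLinearFactor f)
    (hf : f.IsHomogeneous (Fintype.card F))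
    (hcard : (Fintype.card F - 1) * Fintype.card F + 1 < #(zeroPoints f)) :
    Fintype.card F = 4 ∧ ProjectivelyEquivalent F f (hommaKimQuartic F) := by
  obtain ⟨h4, h7, hlines⟩ := card_eq_four_of_degree_card hno hf hcard
  exact ⟨h4, IsFanoQuartic.projectivelyEquivalent_hommaKimQuartic ⟨h4 ▸ hf, h7, hlines⟩ h4⟩

theorem card_zeroPoints_le (hno : NoLinearFactor f) (hf : f.IsHomogeneous d) (hd : 0 < d)
    (hexc : ¬ (Fintype.card F = 4 ∧ d = 4 ∧ ProjectivelyEquivalent F f (hommaKimQuartic F))) :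
    #(zeroPoints f) ≤ (d - 1) * Fintype.card F + 1 := by
  obtain hlt | rfl | hgt := lt_trichotomy d (Fintype.card F)
  · exact card_zeroPoints_le_of_degree_lt_card hno hf hd hlt
  · by_contra! hcard
    obtain ⟨h4, hequiv⟩ :=
      projectivelyEquivalent_hommaKimQuartic_of_lt_card_zeroPoints hno hf hcard
    exact hexc ⟨h4, h4, hequiv⟩
  · obtain rfl | hlt := (Nat.succ_le_of_lt hgt).eq_or_lt
    · simpa [sq] using card_zeroPoints_le_of_degree_card_add_one hno hf
    · exact card_zeroPoints_le_of_card_add_one_lt f hlt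

end Bound

/-- Homma--Kim bound for plane curves without `F_q`-linear component. -/
theorem stmt_0 (q : ℕ) (hq : IsPrimePow q)
    (F : Type) [Field F] [Fintype F] (hF : Fintype.card F = q)
    (d : ℕ) (hd : 0 < d)
    (f : MvPolynomial (Fin 3) F) (hf0 : f ≠ 0) (hfd : f.IsHomogeneous d)
    (hnoline : ¬ ∃ l : MvPolynomial (Fin 3) F, l ≠ 0 ∧ l.IsHomogeneous 1 ∧ l ∣ f) :
    (¬ (q = 4 ∧ d = 4 ∧ ProjectivelyEquivalent F f (hommaKimQuartic F)) →
      {x : Projectivization F (Fin 3 → F) | MvPolynomial.eval x.rep f = 0}.ncard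
        ≤ (d - 1) * q + 1) ∧
    ((q = 4 ∧ d = 4 ∧ ProjectivelyEquivalent F f (hommaKimQuartic F)) →
      {x : Projectivization F (Fin 3 → F) | MvPolynomial.eval x.rep f = 0}.ncard = 14) := by
  subst hF
  rw [ncard_setOf_eval_rep_eq_zero]
  exact ⟨card_zeroPoints_le hnoline hfd hd,
    fun ⟨h4, _, hequiv⟩ ↦ card_zeroPoints_of_projectivelyEquivalent h4 hequiv⟩
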